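/- arXiv:2206.03347 — 2 statements merged into one kernel-verified Lean document; each statement's English description precedes it below -/
import Mathlib

section
/- Let μ⁻, μ⁺ be probability measures on ℝ^d with compact supports X⁻, X⁺ and let c : X⁻ × X⁺ → ℝ be Lipschitz with respect to the norm ‖(x,y)‖ = max(|x|,|y|). Let d⁻, d⁺ denote the upper entropy dimensions of μ⁻, μ⁺. Then limsup_{ε→0⁺} (v_ε − v_0)/(ε·log(1/ε)) ≤ min(d⁺, d⁻); equivalently, v_ε ≤ v_0 + (min(d⁺,d⁻))·ε·log(1/ε) + o(ε·log(1/ε)) as ε → 0⁺. -/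
open MeasureTheory Real Set Filter Classical
open scoped ENNReal NNReal Topology

noncomputable section

/-- Relative entropy (Kullback–Leibler divergence) `Ent(γ | q)`, with values in `EReal`:
it equals `∫ ρ log ρ dq` if `γ = ρ·q` (with `ρ log ρ` integrable) and `+∞` otherwise. -/
def Ent {α : Type*} [MeasurableSpace α] (γ q : Measure α) : EReal :=
  if γ ≪ q ∧ Integrable (fun x => ((γ.rnDeriv q) x).toReal * Real.log ((γ.rnDeriv q) x).toReal) q
  then ((∫ x, ((γ.rnDeriv q) x).toReal * Real.log ((γ.rnDeriv q) x).toReal ∂q : ℝ) : EReal)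
  else ⊤

/-- Entropic optimal transport cost
`v_ε = inf { ∫ c dγ + ε Ent(γ | μ⁻ ⊗ μ⁺) : γ coupling of μ⁻ and μ⁺ }`. -/
def entCost {α β : Type*} [MeasurableSpace α] [MeasurableSpace β]
    (μm : Measure α) (μp : Measure β) (c : α × β → ℝ) (ε : ℝ) : EReal :=
  sInf {v : EReal | ∃ γ : Measure (α × β), IsProbabilityMeasure γ ∧ γ.fst = μm ∧ γ.snd = μp ∧
    v = ((∫ p, c p ∂γ : ℝ) : EReal) + (ε : EReal) * Ent γ (μm.prod μp)}

/-- Support of a measure: the set of points all of whose open neighbourhoods have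
positive measure. -/
def msupport {α : Type*} [TopologicalSpace α] [MeasurableSpace α] (μ : Measure α) : Set α :=
  {x | ∀ U : Set α, IsOpen U → x ∈ U → μ U ≠ 0}

/-- `H_δ(μ)`: infimum over countable Borel coverings of the space by sets of diameter `≤ δ`
of `Σ_n μ(A_n) log(1/μ(A_n))`, with values in `ℝ≥0∞`. -/
def entH {α : Type*} [MeasurableSpace α] [PseudoEMetricSpace α] (δ : ℝ) (μ : Measure α) : ℝ≥0∞ :=
  ⨅ (A : ℕ → Set α) (_ : (∀ n, MeasurableSet (A n)) ∧
      (∀ n, EMetric.diam (A n) ≤ ENNReal.ofReal δ) ∧ (⋃ n, A n) = Set.univ),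
    ∑' n, ENNReal.ofReal (Real.negMulLog ((μ (A n)).toReal))

/-- Upper entropy dimension of a measure: `limsup_{δ→0⁺} H_δ(μ)/log(1/δ)`. -/
def upperEntDim {α : Type*} [MeasurableSpace α] [PseudoEMetricSpace α] (μ : Measure α) : ℝ :=
  Filter.limsup (fun δ : ℝ => (entH δ μ).toReal / Real.log (1 / δ)) (nhdsWithin 0 (Set.Ioi 0))

/-! Given a coupling `γ` of `μ` and `ν` and a countable partition of the second space into cells of
diameter at most `2ε`, resample the second coordinate from `ν` conditioned on its cell. This keeps
the marginals and raises the Lipschitz cost by at most `2Lε`. The density of the new coupling with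
respect to `μ ⊗ ν` is at most `1 / ν(cell of y)`, so its relative entropy is at most the Shannon
entropy of the partition. A cover that is nearly optimal for `H_ε(ν)` yields such a partition with
Shannon entropy at most `H_ε(ν) + 3`, whence `v_ε ≤ v₀ + ε (2L + 3 + H_ε(ν))`; divide by
`ε log (1/ε)`, and exchange the roles of the marginals.

A bounded set in dimension `n` meets `O(δ⁻ⁿ)` cells of a grid of mesh `δ`, so `H_δ(ν)` is
`O(log (1/δ))`. This boundedness keeps the real-valued limsup in `upperEntDim` from being a junk
value. -/

open ProbabilityTheory InformationTheory

section RelativeEntropy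

variable {α : Type*} [MeasurableSpace α] (γ q : Measure α) [IsProbabilityMeasure γ]
  [IsProbabilityMeasure q]

lemma Ent_eq_klDiv : Ent γ q = klDiv γ q := by
  by_cases hac : γ ≪ q
  · by_cases hint : Integrable (llr γ q) γ
    · rw [Ent, if_pos ⟨hac, (integrable_rnDeriv_mul_log_iff hac).2 hint⟩,
        integral_rnDeriv_mul_log hac, ← toReal_klDiv_of_measure_eq hac (by simp),
        EReal.coe_ennreal_toReal (klDiv_ne_top hac hint)]
    · rw [Ent, if_neg fun h => hint ((integrable_rnDeriv_mul_log_iff hac).1 h.2),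
        klDiv_of_not_integrable hint, EReal.coe_ennreal_top]
  · rw [Ent, if_neg fun h => hac h.1, klDiv_of_not_ac hac, EReal.coe_ennreal_top]

variable {γ q}

lemma ofReal_klFun_add_le {a : ℝ≥0∞} {b : ℝ} (hab : a ≤ ENNReal.ofReal b) :
    ENNReal.ofReal (klFun a.toReal) + a ≤ a * ENNReal.ofReal (log b) + 1 := by
  lift a to ℝ≥0 using ne_top_of_le_ne_top ENNReal.ofReal_ne_top hab
  rcases eq_zero_or_pos a with rfl | ha
  · simp [klFun_zero]
  have ha' : (0 : ℝ) < a := ha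
  have hb : (a : ℝ) ≤ b := (Real.le_toNNReal_iff_coe_le' ha).1 (ENNReal.coe_le_coe.1 hab)
  calc ENNReal.ofReal (klFun a) + a = ENNReal.ofReal (a * log a + 1) := by
        rw [← ENNReal.ofReal_coe_nnreal, ← ENNReal.ofReal_add (klFun_nonneg ha'.le) ha'.le,
          klFun_apply, sub_add_cancel]
    _ ≤ ENNReal.ofReal (a * log b + 1) := by gcongr
    _ ≤ a * ENNReal.ofReal (log b) + 1 := by
        refine ENNReal.ofReal_add_le.trans_eq ?_
        rw [ENNReal.ofReal_mul ha'.le, ENNReal.ofReal_coe_nnreal, ENNReal.ofReal_one]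

lemma klDiv_le_lintegral_log {g : α → ℝ} (hg : Measurable g)
    (hγ : γ ≤ q.withDensity fun x => ENNReal.ofReal (g x)) :
    klDiv γ q ≤ ∫⁻ x, ENNReal.ofReal (log (g x)) ∂γ := by
  have hac : γ ≪ q :=
    (Measure.absolutelyContinuous_of_le hγ).trans (withDensity_absolutelyContinuous q _)
  have hρ : γ.rnDeriv q ≤ᵐ[q] fun x => ENNReal.ofReal (g x) := by
    refine ae_le_of_forall_setLIntegral_le_of_sigmaFinite (Measure.measurable_rnDeriv γ q)
      fun s hs _ => ?_
    rw [Measure.setLIntegral_rnDeriv hac, ← withDensity_apply _ hs]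
    exact hγ s
  have hmass : ∫⁻ x, γ.rnDeriv q x ∂q = 1 := by rw [Measure.lintegral_rnDeriv hac, measure_univ]
  refine ENNReal.le_of_add_le_add_right ENNReal.one_ne_top ?_
  calc klDiv γ q + 1
      = ∫⁻ x, (ENNReal.ofReal (klFun (γ.rnDeriv q x).toReal) + γ.rnDeriv q x) ∂q := by
        rw [lintegral_add_right _ (Measure.measurable_rnDeriv γ q), hmass,
          klDiv_eq_lintegral_klFun_of_ac hac]
    _ ≤ ∫⁻ x, (γ.rnDeriv q x * ENNReal.ofReal (log (g x)) + 1) ∂q :=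
        lintegral_mono_ae (hρ.mono fun _ => ofReal_klFun_add_le)
    _ = ∫⁻ x, ENNReal.ofReal (log (g x)) ∂γ + 1 := by
        rw [lintegral_add_right _ measurable_const,
          lintegral_rnDeriv_mul hac hg.log.ennreal_ofReal.aemeasurable]
        simp

end RelativeEntropy

section EntropicCost

variable {α β : Type*} [MeasurableSpace α] [MeasurableSpace β] {μ : Measure α} {ν : Measure β}
  {c : α × β → ℝ} {ε : ℝ}

lemma entCost_le (γ : Measure (α × β)) [IsProbabilityMeasure γ] :
    entCost γ.fst γ.snd c ε ≤ (∫ p, c p ∂γ : ℝ) + (ε : EReal) * klDiv γ (γ.fst.prod γ.snd) :=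
  sInf_le ⟨γ, ‹_›, rfl, rfl, by rw [Ent_eq_klDiv]⟩

lemma le_entCost_zero_iff {v : EReal} : v ≤ entCost μ ν c 0 ↔
    ∀ γ : Measure (α × β), IsProbabilityMeasure γ → γ.fst = μ → γ.snd = ν →
      v ≤ (∫ p, c p ∂γ : ℝ) := by
  simp only [entCost, le_sInf_iff, mem_ofPred_eq, EReal.coe_zero, zero_mul, add_zero]
  exact ⟨fun h γ hγ h₁ h₂ => h _ ⟨γ, hγ, h₁, h₂, rfl⟩,
    fun h v ⟨γ, hγ, h₁, h₂, hv⟩ => hv ▸ h γ hγ h₁ h₂⟩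

lemma entCost_zero_le [IsProbabilityMeasure μ] [IsProbabilityMeasure ν] (hε : 0 ≤ ε) :
    entCost μ ν c 0 ≤ entCost μ ν c ε := by
  refine le_sInf ?_
  rintro _ ⟨γ, hγ, h₁, h₂, rfl⟩
  refine (le_entCost_zero_iff.1 le_rfl γ hγ h₁ h₂).trans (le_add_of_nonneg_right ?_)
  rw [Ent_eq_klDiv]
  exact mul_nonneg (EReal.coe_nonneg.2 hε) (EReal.coe_ennreal_nonneg _)

lemma entCost_zero_ne_top [IsProbabilityMeasure μ] [IsProbabilityMeasure ν] :
    entCost μ ν c 0 ≠ ⊤ :=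
  ne_top_of_le_ne_top (EReal.coe_ne_top _)
    (le_entCost_zero_iff.1 le_rfl (μ.prod ν) inferInstance Measure.fst_prod Measure.snd_prod)

lemma entCost_swap_le (hε : 0 ≤ ε) : entCost ν μ (c ∘ Prod.swap) ε ≤ entCost μ ν c ε := by
  refine le_sInf ?_
  rintro _ ⟨γ, hγ, rfl, rfl, rfl⟩
  have : IsProbabilityMeasure (γ.map Prod.swap) :=
    Measure.isProbabilityMeasure_map measurable_swap.aemeasurable
  have hcost : ∫ p, (c ∘ Prod.swap) p ∂(γ.map Prod.swap) = ∫ p, c p ∂γ :=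
    integral_map_equiv MeasurableEquiv.prodComm _
  have hkl : klDiv (γ.map Prod.swap) (γ.snd.prod γ.fst) ≤ klDiv γ (γ.fst.prod γ.snd) := by
    rw [← Measure.prod_swap]
    exact klDiv_map_le _ _ measurable_swap
  have hle := entCost_le (γ.map Prod.swap) (c := c ∘ Prod.swap) (ε := ε)
  rw [Measure.fst_map_swap, Measure.snd_map_swap, hcost] at hle
  rw [Ent_eq_klDiv]
  refine hle.trans (add_le_add_right (mul_le_mul_of_nonneg_left ?_ (EReal.coe_nonneg.2 hε)) _)
  exact EReal.coe_ennreal_le_coe_ennreal_iff.2 hkl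

lemma entCost_swap (hε : 0 ≤ ε) : entCost ν μ (c ∘ Prod.swap) ε = entCost μ ν c ε :=
  (entCost_swap_le hε).antisymm (entCost_swap_le (c := c ∘ Prod.swap) hε)

end EntropicCost

section ShannonEntropy

variable {α ι : Type*} [MeasurableSpace α]

/-- Shannon entropy `∑ᵢ μ(Aᵢ) log (1 / μ(Aᵢ))` of a family of sets, which need not be disjoint.
All terms are nonnegative when `μ` is a probability measure. -/
def shannonEntropy (μ : Measure α) (A : ι → Set α) : ℝ≥0∞ :=
  ∑' i, ENNReal.ofReal (negMulLog (μ.real (A i)))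

variable [Countable ι] [MeasurableSpace ι] [MeasurableSingletonClass ι] (μ : Measure α)
  {N : α → ι}

lemma lintegral_log_inv_measure_fiber [IsFiniteMeasure μ] (hN : Measurable N) :
    ∫⁻ x, ENNReal.ofReal (log (μ.real (N ⁻¹' {N x}))⁻¹) ∂μ =
      shannonEntropy μ fun i => N ⁻¹' {i} := by
  rw [← lintegral_map (f := fun i => ENNReal.ofReal (log (μ.real (N ⁻¹' {i}))⁻¹))
    (measurable_of_countable _) hN, lintegral_countable']
  refine tsum_congr fun i => ?_
  rw [Measure.map_apply hN (measurableSet_singleton i), ← ofReal_measureReal, mul_comm,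
    ← ENNReal.ofReal_mul measureReal_nonneg, negMulLog, log_inv, mul_neg, neg_mul]

end ShannonEntropy

section BlockCoupling

variable {α β ι : Type*} [MeasurableSpace α] [MeasurableSpace β]

lemma smul_cond_eq_restrict (μ : Measure α) [IsFiniteMeasure μ] {s : Set α}
    (hs : MeasurableSet s) : μ s • μ[|s] = μ.restrict s := by
  ext t ht
  rw [Measure.smul_apply, smul_eq_mul, mul_comm, cond_mul_eq_inter hs, Measure.restrict_apply ht,
    inter_comm]

/-- The law of `((x, y), y')` where `(x, y)` has law `γ` and, given `(x, y)`, the point `y'` is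
drawn from the second marginal of `γ` conditioned on the cell `N ⁻¹' {N y}` of `y`. -/
def cellResample (γ : Measure (α × β)) (N : β → ι) : Measure ((α × β) × β) :=
  Measure.sum fun i => (γ.restrict (Prod.snd ⁻¹' (N ⁻¹' {i}))).prod (γ.snd[|N ⁻¹' {i}])

/-- The block approximation of a coupling `γ`: its second coordinate is resampled from the second
marginal within the cells of the partition indexed by `N`. -/
def blockCoupling (γ : Measure (α × β)) (N : β → ι) : Measure (α × β) :=
  (cellResample γ N).map (Prod.map Prod.fst id)

variable [Countable ι] [MeasurableSpace ι] [MeasurableSingletonClass ι] {N : β → ι}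

lemma sum_restrict_fiber (μ : Measure β) (hN : Measurable N) :
    (Measure.sum fun i => μ.restrict (N ⁻¹' {i})) = μ := by
  rw [← Measure.restrict_iUnion (fun i j hij => (disjoint_singleton.2 hij).preimage N)
    fun i => hN (measurableSet_singleton i), ← preimage_iUnion, iUnion_of_singleton,
    preimage_univ, Measure.restrict_univ]

lemma sum_cond_fiber (μ : Measure β) [IsFiniteMeasure μ] (hN : Measurable N) :
    (Measure.sum fun i => μ[|N ⁻¹' {i}]) =
      μ.withDensity fun y => ENNReal.ofReal (μ.real (N ⁻¹' {N y}))⁻¹ := by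
  rw [← sum_restrict_fiber (μ.withDensity _) hN]
  congr with i : 1
  have hcell : MeasurableSet (N ⁻¹' {i}) := hN (measurableSet_singleton i)
  have hconst : (fun y => ENNReal.ofReal (μ.real (N ⁻¹' {N y}))⁻¹) =ᵐ[μ.restrict (N ⁻¹' {i})]
      fun _ => ENNReal.ofReal (μ.real (N ⁻¹' {i}))⁻¹ := by
    filter_upwards [ae_restrict_mem hcell] with y hy
    rw [show N y = i from hy]
  rw [restrict_withDensity hcell, withDensity_congr_ae hconst, withDensity_const,
    ProbabilityTheory.cond]
  by_cases h : μ (N ⁻¹' {i}) = 0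
  · rw [Measure.restrict_eq_zero.2 h, smul_zero, smul_zero]
  · have hpos : 0 < μ.real (N ⁻¹' {i}) := ENNReal.toReal_pos h (measure_ne_top _ _)
    rw [ENNReal.ofReal_inv_of_pos hpos, ofReal_measureReal]

lemma ae_cellResample_fiber_eq (γ : Measure (α × β)) (hN : Measurable N) :
    ∀ᵐ z ∂cellResample γ N, N z.2 = N z.1.2 := by
  refine Measure.ae_sum_iff.2 fun i => ?_
  have hcell : MeasurableSet (N ⁻¹' {i}) := hN (measurableSet_singleton i)
  filter_upwards [Measure.quasiMeasurePreserving_fst.ae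
    (ae_restrict_mem (measurable_snd hcell)), Measure.quasiMeasurePreserving_snd.ae
    (ae_cond_mem hcell)] with z h₁ h₂
  exact h₂.trans h₁.symm

variable (γ : Measure (α × β)) [IsFiniteMeasure γ]

lemma fst_cellResample (hN : Measurable N) : (cellResample γ N).fst = γ := by
  have hterm : ∀ i, ((γ.restrict (Prod.snd ⁻¹' (N ⁻¹' {i}))).prod (γ.snd[|N ⁻¹' {i}])).fst =
      γ.restrict ((fun p => N p.2) ⁻¹' {i}) := by
    intro i
    have hcell : MeasurableSet (N ⁻¹' {i}) := hN (measurableSet_singleton i)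
    rw [Measure.fst, Measure.map_fst_prod]
    by_cases h : γ.snd (N ⁻¹' {i}) = 0
    · rw [Measure.snd_apply hcell] at h
      rw [Measure.restrict_eq_zero.2 h, smul_zero]
      exact (Measure.restrict_eq_zero.2 h).symm
    · have := cond_isProbabilityMeasure h
      rw [measure_univ, one_smul]
      rfl
  rw [cellResample, Measure.fst_sum]
  simp_rw [hterm]
  exact sum_restrict_fiber γ (hN.comp measurable_snd)

lemma snd_cellResample (hN : Measurable N) : (cellResample γ N).snd = γ.snd := by
  have hterm : ∀ i, ((γ.restrict (Prod.snd ⁻¹' (N ⁻¹' {i}))).prod (γ.snd[|N ⁻¹' {i}])).snd =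
      γ.snd.restrict (N ⁻¹' {i}) := by
    intro i
    have hcell : MeasurableSet (N ⁻¹' {i}) := hN (measurableSet_singleton i)
    rw [Measure.snd, Measure.map_snd_prod, Measure.restrict_apply_univ,
      ← Measure.snd_apply hcell, smul_cond_eq_restrict _ hcell]
  rw [cellResample, Measure.snd_sum]
  simp_rw [hterm]
  exact sum_restrict_fiber γ.snd hN

lemma fst_blockCoupling (hN : Measurable N) : (blockCoupling γ N).fst = γ.fst := by
  conv_rhs => rw [← fst_cellResample γ hN]
  simp only [blockCoupling, Measure.fst]
  rw [Measure.map_map measurable_fst (by fun_prop), Measure.map_map measurable_fst measurable_fst]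
  rfl

lemma snd_blockCoupling (hN : Measurable N) : (blockCoupling γ N).snd = γ.snd := by
  rw [← snd_cellResample γ hN, blockCoupling, Measure.snd,
    Measure.map_map measurable_snd (by fun_prop)]
  rfl

lemma blockCoupling_le (hN : Measurable N) :
    blockCoupling γ N ≤ (γ.fst.prod γ.snd).withDensity
      fun p => ENNReal.ofReal (γ.snd.real (N ⁻¹' {N p.2}))⁻¹ := by
  have hg : Measurable fun y => ENNReal.ofReal (γ.snd.real (N ⁻¹' {N y}))⁻¹ :=
    (measurable_of_countable fun i => ENNReal.ofReal (γ.snd.real (N ⁻¹' {i}))⁻¹).comp hN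
  rw [← prod_withDensity_right hg, ← sum_cond_fiber _ hN, Measure.prod_sum_right, blockCoupling,
    cellResample, Measure.map_sum (by fun_prop)]
  refine Measure.le_iff.2 fun s hs => ?_
  rw [Measure.sum_apply _ hs, Measure.sum_apply _ hs]
  refine ENNReal.tsum_le_tsum fun i => ?_
  rw [← Measure.map_prod_map _ _ measurable_fst measurable_id, Measure.map_id]
  exact Measure.prod_mono (Measure.fst_mono Measure.restrict_le_self) le_rfl s

end BlockCoupling

section BlockCouplingOfProbability

variable {α β ι : Type*} [MeasurableSpace α] [MeasurableSpace β] [Countable ι]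
  [MeasurableSpace ι] [MeasurableSingletonClass ι] {N : β → ι} (γ : Measure (α × β))
  [IsProbabilityMeasure γ]

lemma isProbabilityMeasure_cellResample (hN : Measurable N) :
    IsProbabilityMeasure (cellResample γ N) :=
  ⟨by rw [← Measure.fst_univ, fst_cellResample γ hN, measure_univ]⟩

lemma isProbabilityMeasure_blockCoupling (hN : Measurable N) :
    IsProbabilityMeasure (blockCoupling γ N) :=
  ⟨by rw [← Measure.snd_univ, snd_blockCoupling γ hN, measure_univ]⟩

lemma klDiv_blockCoupling_le (hN : Measurable N) :
    klDiv (blockCoupling γ N) (γ.fst.prod γ.snd) ≤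
      shannonEntropy γ.snd fun i => N ⁻¹' {i} := by
  have := isProbabilityMeasure_blockCoupling γ hN
  have hg : Measurable fun y => (γ.snd.real (N ⁻¹' {N y}))⁻¹ :=
    (measurable_of_countable fun i => (γ.snd.real (N ⁻¹' {i}))⁻¹).comp hN
  calc klDiv (blockCoupling γ N) (γ.fst.prod γ.snd)
      ≤ ∫⁻ p, ENNReal.ofReal (log (γ.snd.real (N ⁻¹' {N p.2}))⁻¹) ∂blockCoupling γ N :=
        klDiv_le_lintegral_log (hg.comp measurable_snd) (blockCoupling_le γ hN)
    _ = ∫⁻ y, ENNReal.ofReal (log (γ.snd.real (N ⁻¹' {N y}))⁻¹) ∂(blockCoupling γ N).snd :=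
        (lintegral_map hg.log.ennreal_ofReal measurable_snd).symm
    _ = shannonEntropy γ.snd fun i => N ⁻¹' {i} := by
        rw [snd_blockCoupling γ hN, lintegral_log_inv_measure_fiber γ.snd hN]

lemma integral_blockCoupling_le (hN : Measurable N) {c : α × β → ℝ} {r : ℝ}
    (hc : Integrable c γ) (hc' : Integrable c (blockCoupling γ N))
    (hr : ∀ᵐ z ∂cellResample γ N, c (z.1.1, z.2) ≤ c z.1 + r) :
    ∫ p, c p ∂blockCoupling γ N ≤ ∫ p, c p ∂γ + r := by
  have := isProbabilityMeasure_cellResample γ hN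
  have hmap : Measurable (Prod.map Prod.fst id : (α × β) × β → α × β) := by fun_prop
  have hfst : Integrable (fun z => c z.1) (cellResample γ N) := by
    rw [← fst_cellResample γ hN] at hc
    exact hc.comp_measurable measurable_fst
  calc ∫ p, c p ∂blockCoupling γ N = ∫ z, c (z.1.1, z.2) ∂cellResample γ N :=
        integral_map hmap.aemeasurable hc'.aestronglyMeasurable
    _ ≤ ∫ z, (c z.1 + r) ∂cellResample γ N :=
        integral_mono_ae (hc'.comp_measurable hmap) (hfst.add (integrable_const r)) hr
    _ = ∫ z, c z.1 ∂cellResample γ N + r := by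
        rw [integral_add hfst (integrable_const r)]
        simp
    _ = ∫ p, c p ∂γ + r := by
        rw [← fst_cellResample γ hN] at hc
        conv_rhs => rw [← fst_cellResample γ hN]
        rw [Measure.fst, integral_map measurable_fst.aemeasurable hc.aestronglyMeasurable]

end BlockCouplingOfProbability

section NegMulLog

lemma negMulLog_le_half {x : ℝ} (hx : 0 ≤ x) : negMulLog x ≤ 1 / 2 := by
  rcases hx.eq_or_lt with rfl | hx
  · simp
  calc negMulLog x = -log x * exp (-(-log x)) := by rw [neg_neg, exp_log hx, negMulLog]; ring
    _ ≤ exp (-1) := mul_exp_neg_le_exp_neg_one _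
    _ ≤ 1 / 2 := exp_neg_one_lt_half.le

lemma half_le_negMulLog {x : ℝ} (hx : 0 ≤ x) (hx' : x ≤ 1 / 2) : x / 2 ≤ negMulLog x := by
  rcases hx.eq_or_lt with rfl | hx
  · simp
  have hlog : log x ≤ -log 2 := by
    rw [← log_inv]
    exact log_le_log hx (by linarith)
  have hmul := mul_le_mul_of_nonneg_left hlog hx.le
  rw [negMulLog]
  nlinarith [log_two_gt_d9]

lemma negMulLog_le_negMulLog_add {a b : ℝ} (hb : 0 ≤ b) (hba : b ≤ a) (ha : a ≤ 1 / 2) :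
    negMulLog b ≤ negMulLog a + b := by
  rcases (hb.trans hba).eq_or_lt with rfl | ha₀
  · simp [le_antisymm hba hb]
  obtain ⟨t, ht, ht₁, rfl⟩ : ∃ t, 0 ≤ t ∧ t ≤ 1 ∧ b = a * t :=
    ⟨b / a, by positivity, div_le_one_of_le₀ hba ha₀.le, by field_simp⟩
  have hgap : (1 - t) * (a / 2) ≤ (1 - t) * negMulLog a :=
    mul_le_mul_of_nonneg_left (half_le_negMulLog ha₀.le ha) (sub_nonneg.2 ht₁)
  calc negMulLog (a * t) = t * negMulLog a + a * negMulLog t := negMulLog_mul a t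
    _ ≤ t * negMulLog a + a * (1 / 2) := by gcongr; exact negMulLog_le_half ht
    _ ≤ negMulLog a + a * t := by nlinarith

end NegMulLog

section CoverToPartition

variable {α : Type*} [MeasurableSpace α]

lemma exists_measurable_index {B : ℕ → Set α} (hB : ∀ n, MeasurableSet (B n))
    (hcover : ⋃ n, B n = univ) : ∃ N : α → ℕ, Measurable N ∧ ∀ x, x ∈ B (N x) := by
  have hmem : ∀ x, ∃ n, x ∈ B n := fun x => mem_iUnion.1 (hcover ▸ mem_univ x)
  exact ⟨fun x => Nat.find (hmem x), measurable_find hmem hB, fun x => Nat.find_spec (hmem x)⟩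

/-- The cover obtained from `A` by merging all members of measure larger than `1/2` into a single
set, which receives the index `0`. Shrinking the other members to disjoint ones is harmless, as
`x ↦ -x log x` is monotone on `[0, 1/2]` up to a linear error, and for a probability measure any two
of the merged members meet, so that the diameters at most double. -/
def mergedCover (μ : Measure α) (A : ℕ → Set α) : ℕ → Set α
  | 0 => ⋃ n ∈ {n | 1 / 2 < μ.real (A n)}, A n
  | n + 1 => if 1 / 2 < μ.real (A n) then ∅ else A n

variable (μ : Measure α) {A : ℕ → Set α}

lemma measurableSet_mergedCover (hA : ∀ n, MeasurableSet (A n)) :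
    ∀ n, MeasurableSet (mergedCover μ A n)
  | 0 => MeasurableSet.biUnion (to_countable _) fun n _ => hA n
  | n + 1 => by
    rw [mergedCover]
    split_ifs
    exacts [MeasurableSet.empty, hA n]

lemma mergedCover_succ_subset (n : ℕ) : mergedCover μ A (n + 1) ⊆ A n := by
  rw [mergedCover]
  split_ifs
  exacts [empty_subset _, subset_rfl]

lemma iUnion_mergedCover : ⋃ n, mergedCover μ A n = ⋃ n, A n := by
  refine subset_antisymm (iUnion_subset fun n => ?_) (iUnion_subset fun n => ?_)
  · cases n with
    | zero => exact iUnion₂_subset fun n _ => subset_iUnion A n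
    | succ n => exact (mergedCover_succ_subset μ n).trans (subset_iUnion A n)
  · by_cases hn : 1 / 2 < μ.real (A n)
    · exact (subset_biUnion_of_mem (u := A) hn).trans (subset_iUnion (mergedCover μ A) 0)
    · refine Subset.trans ?_ (subset_iUnion (mergedCover μ A) (n + 1))
      rw [mergedCover, if_neg hn]

lemma measureReal_mergedCover_succ_le (n : ℕ) : μ.real (mergedCover μ A (n + 1)) ≤ 1 / 2 := by
  rw [mergedCover]
  split_ifs with hn
  exacts [by simp, not_lt.1 hn]

lemma negMulLog_mergedCover_succ_le (n : ℕ) :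
    ENNReal.ofReal (negMulLog (μ.real (mergedCover μ A (n + 1)))) ≤
      ENNReal.ofReal (negMulLog (μ.real (A n))) := by
  rw [mergedCover]
  split_ifs <;> simp

lemma ediam_mergedCover_le [PseudoEMetricSpace α] [IsProbabilityMeasure μ]
    (hA : ∀ n, MeasurableSet (A n)) {r : ℝ≥0∞} (hr : ∀ n, Metric.ediam (A n) ≤ r) :
    ∀ n, Metric.ediam (mergedCover μ A n) ≤ 2 * r
  | 0 => by
    refine Metric.ediam_le fun x hx y hy => ?_
    obtain ⟨i, hi, hxi⟩ := mem_iUnion₂.1 hx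
    obtain ⟨j, hj, hyj⟩ := mem_iUnion₂.1 hy
    obtain ⟨z, hzi, hzj⟩ : (A i ∩ A j).Nonempty := by
      refine nonempty_inter_of_measureReal_lt_add (μ := μ) (hA j) (subset_univ _) (subset_univ _) ?_
      rw [probReal_univ]
      linarith [mem_ofPred.1 hi, mem_ofPred.1 hj]
    calc edist x y ≤ edist x z + edist z y := edist_triangle _ _ _
      _ ≤ r + r := add_le_add (Metric.edist_le_of_ediam_le hxi hzi (hr i))
          (Metric.edist_le_of_ediam_le hzj hyj (hr j))
      _ = 2 * r := (two_mul r).symm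
  | n + 1 => ((Metric.ediam_mono (mergedCover_succ_subset μ n)).trans (hr n)).trans
      (le_mul_of_one_le_left zero_le one_le_two)

lemma tsum_measure_fiber {ι : Type*} [Countable ι] [MeasurableSpace ι]
    [MeasurableSingletonClass ι] {N : α → ι} (hN : Measurable N) :
    ∑' i, μ (N ⁻¹' {i}) = μ univ := by
  conv_rhs => rw [← sum_restrict_fiber μ hN]
  simp

lemma ofReal_negMulLog_measureReal_le [IsFiniteMeasure μ] {s t : Set α} (hst : s ⊆ t)
    (ht : μ.real t ≤ 1 / 2) :
    ENNReal.ofReal (negMulLog (μ.real s)) ≤ ENNReal.ofReal (negMulLog (μ.real t)) + μ s :=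
  calc ENNReal.ofReal (negMulLog (μ.real s))
      ≤ ENNReal.ofReal (negMulLog (μ.real t) + μ.real s) :=
        ENNReal.ofReal_le_ofReal
          (negMulLog_le_negMulLog_add measureReal_nonneg (measureReal_mono hst) ht)
    _ ≤ ENNReal.ofReal (negMulLog (μ.real t)) + μ s := by
        rw [← ofReal_measureReal (μ := μ) (s := s)]
        exact ENNReal.ofReal_add_le

variable [IsProbabilityMeasure μ]

lemma shannonEntropy_fiber_le_add_two {N : α → ℕ} (hN : Measurable N)
    (hmem : ∀ x, x ∈ mergedCover μ A (N x)) :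
    shannonEntropy μ (fun n => N ⁻¹' {n}) ≤ shannonEntropy μ A + 2 := by
  have hsub : ∀ n, N ⁻¹' {n} ⊆ mergedCover μ A n := by
    rintro _ x rfl
    exact hmem x
  have hzero : ENNReal.ofReal (negMulLog (μ.real (N ⁻¹' {0}))) ≤ 1 := by
    rw [← ENNReal.ofReal_one]
    exact ENNReal.ofReal_le_ofReal ((negMulLog_le_half measureReal_nonneg).trans (by norm_num))
  have hsucc : ∀ n, ENNReal.ofReal (negMulLog (μ.real (N ⁻¹' {n + 1}))) ≤
      ENNReal.ofReal (negMulLog (μ.real (A n))) + μ (N ⁻¹' {n + 1}) := fun n =>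
    (ofReal_negMulLog_measureReal_le μ (hsub _) (measureReal_mergedCover_succ_le μ n)).trans
      (add_le_add_left (negMulLog_mergedCover_succ_le μ n) _)
  have hsum : ∑' n, μ (N ⁻¹' {n + 1}) ≤ 1 := by
    rw [← measure_univ (μ := μ), ← tsum_measure_fiber μ hN]
    exact ENNReal.tsum_comp_le_tsum_of_injective (add_left_injective 1) fun n => μ (N ⁻¹' {n})
  calc shannonEntropy μ (fun n => N ⁻¹' {n})
      = ENNReal.ofReal (negMulLog (μ.real (N ⁻¹' {0}))) +
          ∑' n, ENNReal.ofReal (negMulLog (μ.real (N ⁻¹' {n + 1}))) :=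
        tsum_eq_zero_add' ENNReal.summable
    _ ≤ 1 + ∑' n, (ENNReal.ofReal (negMulLog (μ.real (A n))) + μ (N ⁻¹' {n + 1})) :=
        add_le_add hzero (ENNReal.tsum_le_tsum hsucc)
    _ ≤ 1 + (shannonEntropy μ A + 1) := by
        rw [ENNReal.tsum_add]
        gcongr
        rfl
    _ = shannonEntropy μ A + 2 := by rw [add_left_comm, one_add_one_eq_two]

variable [PseudoEMetricSpace α]

lemma exists_partition_of_cover (hA : ∀ n, MeasurableSet (A n)) {r : ℝ≥0∞}
    (hr : ∀ n, Metric.ediam (A n) ≤ r) (hcover : ⋃ n, A n = univ) :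
    ∃ N : α → ℕ, Measurable N ∧ (∀ x y, N x = N y → edist x y ≤ 2 * r) ∧
      shannonEntropy μ (fun n => N ⁻¹' {n}) ≤ shannonEntropy μ A + 2 := by
  obtain ⟨N, hN, hmem⟩ := exists_measurable_index (measurableSet_mergedCover μ hA)
    ((iUnion_mergedCover μ).trans hcover)
  refine ⟨N, hN, fun x y hxy => ?_, shannonEntropy_fiber_le_add_two μ hN hmem⟩
  exact Metric.edist_le_of_ediam_le (hmem x) (hxy ▸ hmem y) (ediam_mergedCover_le μ hA hr _)

lemma exists_partition_of_entH_ne_top {δ : ℝ} (hH : entH δ μ ≠ ∞) :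
    ∃ N : α → ℕ, Measurable N ∧ (∀ x y, N x = N y → edist x y ≤ ENNReal.ofReal (2 * δ)) ∧
      shannonEntropy μ (fun n => N ⁻¹' {n}) ≤ ENNReal.ofReal ((entH δ μ).toReal + 3) := by
  have hlt : entH δ μ < entH δ μ + 1 := ENNReal.lt_add_right hH one_ne_zero
  conv_lhs at hlt => rw [entH]
  simp only [iInf_lt_iff] at hlt
  obtain ⟨A, ⟨hA, hr, hcover⟩, hlt⟩ := hlt
  obtain ⟨N, hN, hdist, hle⟩ := exists_partition_of_cover μ hA hr hcover
  refine ⟨N, hN, fun x y hxy => (hdist x y hxy).trans_eq ?_, ?_⟩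
  · rw [ENNReal.ofReal_mul zero_le_two, ENNReal.ofReal_ofNat]
  · calc shannonEntropy μ (fun n => N ⁻¹' {n}) ≤ entH δ μ + 1 + 2 :=
          hle.trans (add_le_add_left hlt.le 2)
      _ = ENNReal.ofReal ((entH δ μ).toReal + 3) := by
          rw [ENNReal.ofReal_add ENNReal.toReal_nonneg zero_le_three, ENNReal.ofReal_toReal hH,
            add_assoc, ENNReal.ofReal_ofNat]
          norm_num

end CoverToPartition

section EntropyAtScale

variable {α ι : Type*} [MeasurableSpace α] [MeasurableSpace ι] [MeasurableSingletonClass ι]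
  (μ : Measure α) {N : α → ι}

lemma shannonEntropy_fiber_le_log_card [IsProbabilityMeasure μ] (hN : Measurable N)
    {F : Finset ι} (hF : ∀ᵐ x ∂μ, N x ∈ F) :
    shannonEntropy μ (fun i => N ⁻¹' {i}) ≤ ENNReal.ofReal (log F.card) := by
  have hzero : ∀ i ∉ F, μ.real (N ⁻¹' {i}) = 0 := fun i hi =>
    (measureReal_eq_zero_iff (measure_ne_top _ _)).2 <| measure_eq_zero_iff_ae_notMem.2 <|
      hF.mono fun x hx hxi => hi (mem_singleton_iff.1 hxi ▸ hx)
  have hsum : ∑ i ∈ F, μ.real (N ⁻¹' {i}) = 1 := by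
    rw [sum_measureReal_preimage_singleton F fun i _ => hN (measurableSet_singleton i),
      ← probReal_univ (μ := μ)]
    exact measureReal_congr (eventuallyEq_univ.2 hF)
  have hcard : (0 : ℝ) < F.card := by
    rw [Nat.cast_pos, Finset.card_pos, Finset.nonempty_iff_ne_empty]
    rintro rfl
    simp at hsum
  have hjensen := concaveOn_negMulLog.le_map_sum (t := F) (w := fun _ => (F.card : ℝ)⁻¹)
    (p := fun i => μ.real (N ⁻¹' {i})) (fun _ _ => by positivity)
    (by simp [hcard.ne']) fun _ _ => measureReal_nonneg
  simp only [smul_eq_mul, ← Finset.mul_sum, hsum, mul_one] at hjensen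
  calc shannonEntropy μ (fun i => N ⁻¹' {i})
      = ∑ i ∈ F, ENNReal.ofReal (negMulLog (μ.real (N ⁻¹' {i}))) :=
        tsum_eq_sum fun i hi => by simp [hzero i hi]
    _ = ENNReal.ofReal (∑ i ∈ F, negMulLog (μ.real (N ⁻¹' {i}))) :=
        (ENNReal.ofReal_sum_of_nonneg fun i _ =>
          negMulLog_nonneg measureReal_nonneg measureReal_le_one).symm
    _ ≤ ENNReal.ofReal (log F.card) := by
        refine ENNReal.ofReal_le_ofReal (le_of_mul_le_mul_left ?_ (inv_pos.2 hcard))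
        rwa [negMulLog, log_inv, neg_mul_neg] at hjensen

lemma entH_le_shannonEntropy_fiber [Countable ι] [PseudoEMetricSpace α] {δ : ℝ}
    (hN : Measurable N) (hdist : ∀ x y, N x = N y → edist x y ≤ ENNReal.ofReal δ) :
    entH δ μ ≤ shannonEntropy μ fun i => N ⁻¹' {i} := by
  have := Encodable.ofCountable ι
  rw [shannonEntropy, ← tsum_iUnion_decode₂ (fun s => ENNReal.ofReal (negMulLog (μ.real s)))
    (by simp)]
  refine iInf₂_le _ ⟨fun n => ?_, fun n => ?_, ?_⟩
  · exact MeasurableSet.iUnion fun i => MeasurableSet.iUnion fun _ =>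
      hN (measurableSet_singleton i)
  · refine Encodable.iUnion_decode₂_cases (C := fun s => Metric.ediam s ≤ ENNReal.ofReal δ)
      (by simp) fun i => Metric.ediam_le ?_
    rintro x rfl y hy
    exact hdist x y hy.symm
  · rw [Encodable.iUnion_decode₂, ← preimage_iUnion, iUnion_of_singleton, preimage_univ]

end EntropyAtScale

section Grid

variable {κ : Type*} [Fintype κ]

lemma edist_le_of_floor_div_eq {u v : κ → ℝ} {s : ℝ} (hs : 0 < s)
    (h : ∀ i, ⌊u i / s⌋ = ⌊v i / s⌋) : edist u v ≤ ENNReal.ofReal s := by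
  refine edist_pi_le_iff.2 fun i => ?_
  rw [edist_dist, Real.dist_eq]
  have hlt := Int.abs_sub_lt_one_of_floor_eq_floor (h i)
  rw [← sub_div, abs_div, abs_of_pos hs, div_lt_one hs] at hlt
  exact ENNReal.ofReal_le_ofReal hlt.le

lemma card_Icc_floor_le {R : ℝ} (hR : 0 ≤ R) :
    ((Finset.Icc ⌊-R⌋ ⌊R⌋).card : ℝ) ≤ 2 * R + 2 := by
  have hnonneg : 0 ≤ ⌊R⌋ + 1 - ⌊-R⌋ := by
    linarith [Int.floor_le_floor (neg_le_self hR)]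
  rw [Int.card_Icc, ← Int.cast_natCast, Int.toNat_of_nonneg hnonneg]
  push_cast
  linarith [Int.floor_le R, Int.lt_floor_add_one (-R)]

variable {α : Type*} [MeasurableSpace α] [PseudoEMetricSpace α] (μ : Measure α)
  [IsProbabilityMeasure μ] {K : ℝ≥0} {f : α → κ → ℝ}

lemma entH_le_card_mul_log_of_antilipschitz (hf : Measurable f) (hK : AntilipschitzWith K f)
    {R : ℝ} (hR : 0 ≤ R) (hμ : ∀ᵐ x ∂μ, ‖f x‖ ≤ R) {s δ : ℝ} (hs : 0 < s) (hsδ : K * s ≤ δ) :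
    entH δ μ ≤ ENNReal.ofReal (Fintype.card κ * log (2 * (R / s) + 2)) := by
  set N : α → κ → ℤ := fun x i => ⌊f x i / s⌋
  have hN : Measurable N := measurable_pi_lambda _ fun i =>
    (((measurable_pi_apply i).comp hf).div_const s).floor
  have hdist : ∀ x y, N x = N y → edist x y ≤ ENNReal.ofReal δ := fun x y hxy =>
    calc edist x y ≤ K * edist (f x) (f y) := hK x y
      _ ≤ K * ENNReal.ofReal s := by
        gcongr
        exact edist_le_of_floor_div_eq hs (congrFun hxy)
      _ ≤ ENNReal.ofReal δ := by
        rw [← ENNReal.ofReal_coe_nnreal, ← ENNReal.ofReal_mul K.coe_nonneg]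
        exact ENNReal.ofReal_le_ofReal hsδ
  have hF : ∀ᵐ x ∂μ, N x ∈ Fintype.piFinset fun _ : κ => Finset.Icc ⌊-(R / s)⌋ ⌊R / s⌋ := by
    filter_upwards [hμ] with x hx
    refine Fintype.mem_piFinset.2 fun i => Finset.mem_Icc.2 ?_
    obtain ⟨hlo, hhi⟩ := abs_le.1 ((norm_le_pi_norm (f x) i).trans hx)
    exact ⟨Int.floor_le_floor (by rw [← neg_div]; gcongr), Int.floor_le_floor (by gcongr)⟩
  refine (entH_le_shannonEntropy_fiber μ hN hdist).trans
    ((shannonEntropy_fiber_le_log_card μ hN hF).trans (ENNReal.ofReal_le_ofReal ?_))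
  have hcell : (0 : ℝ) < (Finset.Icc ⌊-(R / s)⌋ ⌊R / s⌋).card := by
    rw [Nat.cast_pos, Finset.card_pos, Finset.nonempty_Icc]
    exact Int.floor_le_floor (neg_le_self (by positivity))
  rw [Fintype.card_piFinset, Finset.prod_const, Finset.card_univ, Nat.cast_pow, log_pow]
  gcongr
  exact card_Icc_floor_le (by positivity)

lemma eventually_log_mul_add_two_le {a : ℝ} (ha : 0 ≤ a) :
    ∀ᶠ t in atTop, log (a * t + 2) ≤ 2 * log t := by
  filter_upwards [eventually_ge_atTop (a + 2), eventually_ge_atTop 1] with t hat ht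
  calc log (a * t + 2) ≤ log (t ^ 2) := log_le_log (by positivity) (by nlinarith)
    _ = 2 * log t := by rw [log_pow, Nat.cast_ofNat]

lemma eventually_entH_le_of_antilipschitz (hf : Measurable f) (hK : AntilipschitzWith K f)
    {R : ℝ} (hR : 0 ≤ R) (hμ : ∀ᵐ x ∂μ, ‖f x‖ ≤ R) :
    ∀ᶠ δ in 𝓝[>] 0, entH δ μ ≤ ENNReal.ofReal (2 * Fintype.card κ * log (1 / δ)) := by
  have hlog := tendsto_inv_nhdsGT_zero.eventually
    (eventually_log_mul_add_two_le (a := 2 * R * (K + 1)) (by positivity))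
  filter_upwards [hlog, self_mem_nhdsWithin] with δ hlog (hδ : 0 < δ)
  have hKδ : K * (δ / (K + 1)) ≤ δ := by
    rw [mul_div_left_comm]
    exact mul_le_of_le_one_right hδ.le (div_le_one_of_le₀ (by linarith) (by positivity))
  refine (entH_le_card_mul_log_of_antilipschitz μ hf hK hR hμ (by positivity) hKδ).trans
    (ENNReal.ofReal_le_ofReal ?_)
  have hscale : 2 * (R / (δ / (K + 1))) = 2 * R * (K + 1) * δ⁻¹ := by field_simp
  calc Fintype.card κ * log (2 * (R / (δ / (K + 1))) + 2)
      ≤ Fintype.card κ * (2 * log (1 / δ)) := by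
        rw [hscale, one_div]
        exact mul_le_mul_of_nonneg_left hlog (Nat.cast_nonneg _)
    _ = 2 * Fintype.card κ * log (1 / δ) := by ring

lemma eventually_entH_le_of_isBounded {E : Type*} [NormedAddCommGroup E] [NormedSpace ℝ E]
    [FiniteDimensional ℝ E] [MeasurableSpace E] [BorelSpace E] (μ : Measure E)
    [IsProbabilityMeasure μ] {S : Set E} (hS : Bornology.IsBounded S) (hμ : ∀ᵐ x ∂μ, x ∈ S) :
    ∀ᶠ δ in 𝓝[>] 0, entH δ μ ≤ ENNReal.ofReal (2 * Module.finrank ℝ E * log (1 / δ)) := by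
  set f : E ≃L[ℝ] (Fin (Module.finrank ℝ E) → ℝ) := (Module.finBasis ℝ E).equivFunL
  obtain ⟨R, hR, hRS⟩ := (f.lipschitz.isBounded_image hS).exists_pos_norm_le
  have hf := eventually_entH_le_of_antilipschitz μ f.continuous.measurable f.antilipschitz hR.le
    (hμ.mono fun x hx => hRS _ (mem_image_of_mem f hx))
  rwa [Fintype.card_fin] at hf

end Grid

section Support

lemma ae_mem_msupport {α : Type*} [TopologicalSpace α] [HereditarilyLindelofSpace α]
    [MeasurableSpace α] (μ : Measure α) : ∀ᵐ x ∂μ, x ∈ msupport μ := by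
  filter_upwards [Measure.support_mem_ae (μ := μ)] with x hx U hU hxU
  exact ((Measure.mem_support_iff_forall x).1 hx U (hU.mem_nhds hxU)).ne'

lemma ae_mem_prod_of_ae_fst_of_ae_snd {α β : Type*} [MeasurableSpace α] [MeasurableSpace β]
    {γ : Measure (α × β)} {S : Set α} {T : Set β} (hS : ∀ᵐ x ∂γ.fst, x ∈ S)
    (hT : ∀ᵐ y ∂γ.snd, y ∈ T) : ∀ᵐ p ∂γ, p ∈ S ×ˢ T :=
  (ae_of_ae_map measurable_fst.aemeasurable hS).and (ae_of_ae_map measurable_snd.aemeasurable hT)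

lemma entCost_zero_ne_bot {α β : Type*} [MeasurableSpace α] [MeasurableSpace β] {μ : Measure α}
    {ν : Measure β} {c : α × β → ℝ} {S : Set α} {T : Set β} (hS : ∀ᵐ x ∂μ, x ∈ S)
    (hT : ∀ᵐ y ∂ν, y ∈ T) {C : ℝ} (hC : ∀ p ∈ S ×ˢ T, ‖c p‖ ≤ C) : entCost μ ν c 0 ≠ ⊥ := by
  have hlower : ((-C : ℝ) : EReal) ≤ entCost μ ν c 0 := by
    refine le_entCost_zero_iff.2 fun γ _ hfst hsnd => EReal.coe_le_coe_iff.2 ?_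
    have hbound : ∀ᵐ p ∂γ, ‖c p‖ ≤ C :=
      (ae_mem_prod_of_ae_fst_of_ae_snd (hfst ▸ hS) (hsnd ▸ hT)).mono hC
    have hnorm := norm_integral_le_of_norm_le_const hbound
    rw [probReal_univ, mul_one] at hnorm
    exact (abs_le.1 hnorm).1
  exact ne_bot_of_le_ne_bot (EReal.coe_ne_bot _) hlower

lemma integrable_of_continuousOn_of_ae_mem {X : Type*} [TopologicalSpace X] [T2Space X]
    [MeasurableSpace X] [OpensMeasurableSpace X] {γ : Measure X} [IsFiniteMeasure γ]
    {f : X → ℝ} {K : Set X} (hK : IsCompact K) (hf : ContinuousOn f K) (hγ : ∀ᵐ p ∂γ, p ∈ K) :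
    Integrable f γ := by
  rw [← Measure.restrict_eq_self_of_ae_mem hγ]
  exact hf.integrableOn_compact hK

end Support

section LipschitzCost

lemma ae_cellResample_le_add {α β ι : Type*} [PseudoMetricSpace α] [MeasurableSpace α]
    [PseudoMetricSpace β] [MeasurableSpace β] [Countable ι] [MeasurableSpace ι]
    [MeasurableSingletonClass ι] {γ : Measure (α × β)} [IsFiniteMeasure γ] {N : β → ι}
    {c : α × β → ℝ} {L : ℝ≥0} {S : Set α} {T : Set β} {r : ℝ}
    (hc : LipschitzOnWith L c (S ×ˢ T)) (hS : ∀ᵐ x ∂γ.fst, x ∈ S) (hT : ∀ᵐ y ∂γ.snd, y ∈ T)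
    (hN : Measurable N) (hr : ∀ y y', N y = N y' → dist y y' ≤ r) :
    ∀ᵐ z ∂cellResample γ N, c (z.1.1, z.2) ≤ c z.1 + L * r := by
  have hfst : ∀ᵐ p ∂(cellResample γ N).fst, p ∈ S ×ˢ T := by
    rw [fst_cellResample γ hN]
    exact ae_mem_prod_of_ae_fst_of_ae_snd hS hT
  have hsnd : ∀ᵐ y ∂(cellResample γ N).snd, y ∈ T := by rwa [snd_cellResample γ hN]
  filter_upwards [ae_of_ae_map measurable_fst.aemeasurable hfst,
    ae_of_ae_map measurable_snd.aemeasurable hsnd, ae_cellResample_fiber_eq γ hN] with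
    z hz₁ hz₂ hcell
  have hdist : dist (z.1.1, z.2) z.1 = dist z.2 z.1.2 := by simp [Prod.dist_eq]
  calc c (z.1.1, z.2) ≤ c z.1 + L * dist (z.1.1, z.2) z.1 :=
        hc.le_add_mul (mk_mem_prod hz₁.1 hz₂) hz₁
    _ ≤ c z.1 + L * r := by
        rw [hdist]
        gcongr
        exact hr _ _ hcell

variable {α β : Type*} [MetricSpace α] [MeasurableSpace α] [OpensMeasurableSpace α]
  [MetricSpace β] [MeasurableSpace β] [OpensMeasurableSpace β] [SecondCountableTopologyEither α β]
  {c : α × β → ℝ} {L : ℝ≥0} {S : Set α} {T : Set β} {ε : ℝ}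

lemma entCost_le_integral_add (γ : Measure (α × β)) [IsProbabilityMeasure γ]
    (hSc : IsCompact S) (hTc : IsCompact T) (hS : ∀ᵐ x ∂γ.fst, x ∈ S) (hT : ∀ᵐ y ∂γ.snd, y ∈ T)
    (hc : LipschitzOnWith L c (S ×ˢ T)) (hε : 0 ≤ ε) (hH : entH ε γ.snd ≠ ∞) :
    entCost γ.fst γ.snd c ε ≤
      (∫ p, c p ∂γ : ℝ) + (ε * (2 * L + 3 + (entH ε γ.snd).toReal) : ℝ) := by
  obtain ⟨N, hN, hdist, hentropy⟩ := exists_partition_of_entH_ne_top γ.snd hH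
  have := isProbabilityMeasure_blockCoupling γ hN
  have hint : ∀ ρ : Measure (α × β), IsProbabilityMeasure ρ → ρ.fst = γ.fst →
      ρ.snd = γ.snd → Integrable c ρ := fun ρ _ h₁ h₂ =>
    integrable_of_continuousOn_of_ae_mem (hSc.prod hTc) hc.continuousOn
      (ae_mem_prod_of_ae_fst_of_ae_snd (h₁ ▸ hS) (h₂ ▸ hT))
  have htransport : ∫ p, c p ∂blockCoupling γ N ≤ ∫ p, c p ∂γ + L * (2 * ε) :=
    integral_blockCoupling_le γ hN (hint γ ‹_› rfl rfl)
      (hint _ this (fst_blockCoupling γ hN) (snd_blockCoupling γ hN))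
      (ae_cellResample_le_add hc hS hT hN fun y y' h =>
        (edist_le_ofReal (by positivity)).1 (hdist y y' h))
  have hkl : (klDiv (blockCoupling γ N) (γ.fst.prod γ.snd) : EReal) ≤
      ((entH ε γ.snd).toReal + 3 : ℝ) := by
    have h₀ : 0 ≤ (entH ε γ.snd).toReal + 3 := by positivity
    rw [← max_eq_left h₀, ← EReal.coe_ennreal_ofReal, EReal.coe_ennreal_le_coe_ennreal_iff]
    exact (klDiv_blockCoupling_le γ hN).trans hentropy
  have hle := entCost_le (blockCoupling γ N) (c := c) (ε := ε)
  rw [fst_blockCoupling γ hN, snd_blockCoupling γ hN] at hle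
  calc entCost γ.fst γ.snd c ε
      ≤ (∫ p, c p ∂γ + L * (2 * ε) : ℝ) + (ε : EReal) * ((entH ε γ.snd).toReal + 3 : ℝ) :=
        hle.trans (add_le_add (EReal.coe_le_coe_iff.2 htransport)
          (mul_le_mul_of_nonneg_left hkl (EReal.coe_nonneg.2 hε)))
    _ = (∫ p, c p ∂γ : ℝ) + (ε * (2 * L + 3 + (entH ε γ.snd).toReal) : ℝ) := by
        rw [← EReal.coe_mul, ← EReal.coe_add, ← EReal.coe_add]
        exact congrArg Real.toEReal (by ring)

variable {μ : Measure α} {ν : Measure β} [IsProbabilityMeasure μ] [IsProbabilityMeasure ν]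

lemma entCost_le_entCost_zero_add (hSc : IsCompact S) (hTc : IsCompact T)
    (hS : ∀ᵐ x ∂μ, x ∈ S) (hT : ∀ᵐ y ∂ν, y ∈ T) (hc : LipschitzOnWith L c (S ×ˢ T))
    (hε : 0 ≤ ε) (hH : entH ε ν ≠ ∞) :
    entCost μ ν c ε ≤ entCost μ ν c 0 + (ε * (2 * L + 3 + (entH ε ν).toReal) : ℝ) := by
  rw [← EReal.sub_le_iff_le_add (.inl (EReal.coe_ne_bot _)) (.inl (EReal.coe_ne_top _))]
  refine le_entCost_zero_iff.2 fun γ _ hfst hsnd => ?_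
  subst hfst hsnd
  rw [EReal.sub_le_iff_le_add (.inl (EReal.coe_ne_bot _)) (.inl (EReal.coe_ne_top _))]
  exact entCost_le_integral_add γ hSc hTc hS hT hc hε hH

lemma toReal_entCost_sub_mem_Icc (hSc : IsCompact S) (hTc : IsCompact T) (hS : ∀ᵐ x ∂μ, x ∈ S)
    (hT : ∀ᵐ y ∂ν, y ∈ T) (hc : LipschitzOnWith L c (S ×ˢ T)) (hε : 0 ≤ ε)
    (hH : entH ε ν ≠ ∞) :
    (entCost μ ν c ε).toReal - (entCost μ ν c 0).toReal ∈
      Icc 0 (ε * (2 * L + 3 + (entH ε ν).toReal)) := by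
  have hle := entCost_zero_le (μ := μ) (ν := ν) (c := c) hε
  have hge := entCost_le_entCost_zero_add hSc hTc hS hT hc hε hH
  obtain ⟨C, hC⟩ := (hSc.prod hTc).exists_bound_of_continuousOn hc.continuousOn
  have hbot := entCost_zero_ne_bot hS hT hC
  have htop : entCost μ ν c 0 ≠ ⊤ := entCost_zero_ne_top
  lift entCost μ ν c 0 to ℝ using ⟨htop, hbot⟩ with v₀
  lift entCost μ ν c ε to ℝ using
    ⟨ne_top_of_le_ne_top (EReal.coe_ne_top (v₀ + _)) hge, ne_bot_of_le_ne_bot hbot hle⟩ with vε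
  norm_cast at hle hge
  rw [EReal.toReal_coe, EReal.toReal_coe]
  exact ⟨sub_nonneg.2 hle, sub_le_iff_le_add'.2 hge⟩

end LipschitzCost

section Limsup

lemma eventually_pos_and_log_one_div_pos : ∀ᶠ ε : ℝ in 𝓝[>] 0, 0 < ε ∧ 0 < log (1 / ε) := by
  filter_upwards [Ioo_mem_nhdsGT zero_lt_one] with ε hε
  exact ⟨hε.1, log_pos (one_lt_one_div hε.1 hε.2)⟩

lemma isBoundedUnder_entH_div_log {α : Type*} [MeasurableSpace α] [PseudoEMetricSpace α]
    {μ : Measure α} {C : ℝ}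
    (hμ : ∀ᶠ δ in 𝓝[>] 0, entH δ μ ≤ ENNReal.ofReal (C * log (1 / δ))) :
    IsBoundedUnder (· ≤ ·) (𝓝[>] 0) fun δ => (entH δ μ).toReal / log (1 / δ) := by
  refine isBoundedUnder_of_eventually_le (a := max C 0) ?_
  filter_upwards [hμ, eventually_pos_and_log_one_div_pos] with δ hH ⟨_, hlog⟩
  rw [div_le_iff₀ hlog]
  refine ENNReal.toReal_le_of_le_ofReal (by positivity) (hH.trans (ENNReal.ofReal_le_ofReal ?_))
  gcongr
  exact le_max_left C 0

lemma tendsto_const_div_log_one_div (a : ℝ) :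
    Tendsto (fun ε => a / log (1 / ε)) (𝓝[>] 0) (𝓝 0) := by
  simp only [one_div]
  exact (tendsto_log_atTop.comp tendsto_inv_nhdsGT_zero).const_div_atTop a

variable {α β : Type*} [MetricSpace α] [MeasurableSpace α] [OpensMeasurableSpace α]
  [MetricSpace β] [MeasurableSpace β] [OpensMeasurableSpace β] [SecondCountableTopologyEither α β]
  {c : α × β → ℝ} {L : ℝ≥0} {S : Set α} {T : Set β} {μ : Measure α} {ν : Measure β}
  [IsProbabilityMeasure μ] [IsProbabilityMeasure ν]

lemma eventually_excess_div_mem_Icc (hSc : IsCompact S) (hTc : IsCompact T)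
    (hS : ∀ᵐ x ∂μ, x ∈ S) (hT : ∀ᵐ y ∂ν, y ∈ T) (hc : LipschitzOnWith L c (S ×ˢ T))
    (hν : ∀ᶠ δ in 𝓝[>] 0, entH δ ν ≠ ∞) :
    ∀ᶠ ε in 𝓝[>] 0,
      ((entCost μ ν c ε).toReal - (entCost μ ν c 0).toReal) / (ε * log (1 / ε)) ∈
        Icc 0 ((2 * L + 3) / log (1 / ε) + (entH ε ν).toReal / log (1 / ε)) := by
  filter_upwards [hν, eventually_pos_and_log_one_div_pos] with ε hH ⟨hε, hlog⟩
  obtain ⟨hlo, hhi⟩ := toReal_entCost_sub_mem_Icc hSc hTc hS hT hc hε.le hH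
  refine ⟨by positivity, ?_⟩
  rw [← add_div, div_le_div_iff₀ (by positivity) hlog]
  calc ((entCost μ ν c ε).toReal - (entCost μ ν c 0).toReal) * log (1 / ε)
      ≤ ε * (2 * L + 3 + (entH ε ν).toReal) * log (1 / ε) := by gcongr
    _ = (2 * L + 3 + (entH ε ν).toReal) * (ε * log (1 / ε)) := by ring

lemma limsup_excess_div_le_upperEntDim (hSc : IsCompact S) (hTc : IsCompact T)
    (hS : ∀ᵐ x ∂μ, x ∈ S) (hT : ∀ᵐ y ∂ν, y ∈ T) (hc : LipschitzOnWith L c (S ×ˢ T)) {C : ℝ}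
    (hν : ∀ᶠ δ in 𝓝[>] 0, entH δ ν ≤ ENNReal.ofReal (C * log (1 / δ))) :
    limsup (fun ε => ((entCost μ ν c ε).toReal - (entCost μ ν c 0).toReal)
      / (ε * log (1 / ε))) (𝓝[>] 0) ≤ upperEntDim ν := by
  have hmem := eventually_excess_div_mem_Icc hSc hTc hS hT hc
    (hν.mono fun δ h => ne_top_of_le_ne_top ENNReal.ofReal_ne_top h)
  refine le_of_forall_pos_le_add fun η hη => ?_
  have hdim := eventually_lt_of_limsup_lt (lt_add_of_pos_right (upperEntDim ν) (half_pos hη))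
    (isBoundedUnder_entH_div_log hν)
  have hrem := (tendsto_const_div_log_one_div (2 * L + 3)).eventually_lt_const (half_pos hη)
  refine limsup_le_of_le (isCoboundedUnder_le_of_eventually_le _ (hmem.mono fun ε h => h.1)) ?_
  filter_upwards [hmem, hdim, hrem] with ε hε hdim hrem
  linarith [hε.2]

end Limsup

lemma lipschitzOnWith_comp_swap {α β γ : Type*} [PseudoEMetricSpace α] [PseudoEMetricSpace β]
    [PseudoEMetricSpace γ] {f : α × β → γ} {L : ℝ≥0} {S : Set α} {T : Set β}
    (hf : LipschitzOnWith L f (S ×ˢ T)) : LipschitzOnWith L (f ∘ Prod.swap) (T ×ˢ S) := by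
  intro p hp q hq
  refine (hf ⟨hp.2, hp.1⟩ ⟨hq.2, hq.1⟩).trans_eq ?_
  simp only [Prod.edist_eq, Prod.fst_swap, Prod.snd_swap, max_comm]

section FiniteDimensional

variable {E F : Type*} [NormedAddCommGroup E] [NormedSpace ℝ E] [FiniteDimensional ℝ E]
  [MeasurableSpace E] [BorelSpace E] [NormedAddCommGroup F] [NormedSpace ℝ F]
  [FiniteDimensional ℝ F] [MeasurableSpace F] [BorelSpace F]

theorem entCost_upper_bound_entropy_dimension_general (μm : Measure E) (μp : Measure F)
    [IsProbabilityMeasure μm] [IsProbabilityMeasure μp]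
    (hXm : IsCompact (msupport μm)) (hXp : IsCompact (msupport μp)) (c : E × F → ℝ)
    (L : ℝ≥0) (hc : LipschitzOnWith L c (msupport μm ×ˢ msupport μp)) :
    limsup (fun ε => ((entCost μm μp c ε).toReal - (entCost μm μp c 0).toReal)
      / (ε * log (1 / ε))) (𝓝[>] 0) ≤ min (upperEntDim μp) (upperEntDim μm) := by
  have := FiniteDimensional.proper_real E
  have := FiniteDimensional.proper_real F
  have hm := ae_mem_msupport μm
  have hp := ae_mem_msupport μp
  have hEntm := eventually_entH_le_of_isBounded μm hXm.isBounded hm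
  have hEntp := eventually_entH_le_of_isBounded μp hXp.isBounded hp
  refine le_min (limsup_excess_div_le_upperEntDim hXm hXp hm hp hc hEntp) ?_
  refine le_trans (limsup_congr ?_).le
    (limsup_excess_div_le_upperEntDim hXp hXm hp hm (lipschitzOnWith_comp_swap hc) hEntm)
  filter_upwards [self_mem_nhdsWithin] with ε (hε : 0 < ε)
  rw [entCost_swap hε.le, entCost_swap le_rfl]

end FiniteDimensional

/-- For Lipschitz costs, `limsup_{ε→0⁺} (v_ε − v₀)/(ε log(1/ε)) ≤ min(d⁺, d⁻)` where `d^±`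
are the upper entropy dimensions of the marginals. -/
theorem entCost_upper_bound_entropy_dimension {d : ℕ}
    (μm μp : Measure (EuclideanSpace ℝ (Fin d)))
    [IsProbabilityMeasure μm] [IsProbabilityMeasure μp]
    (hXm : IsCompact (msupport μm)) (hXp : IsCompact (msupport μp))
    (c : EuclideanSpace ℝ (Fin d) × EuclideanSpace ℝ (Fin d) → ℝ)
    (L : ℝ≥0) (hc : LipschitzOnWith L c (msupport μm ×ˢ msupport μp)) :
    Filter.limsup
      (fun ε : ℝ => ((entCost μm μp c ε).toReal - (entCost μm μp c 0).toReal)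
        / (ε * Real.log (1 / ε)))
      (nhdsWithin 0 (Set.Ioi 0))
      ≤ min (upperEntDim μp) (upperEntDim μm) :=
  entCost_upper_bound_entropy_dimension_general μm μp hXm hXp c L hc
end
end

section
/- Let Ω⁻, Ω⁺ ⊆ ℝ^d be open convex sets, let c : Ω⁻ × Ω⁺ → ℝ be continuously differentiable with locally Lipschitz gradient (c ∈ C^{1,1}_loc), and let μ⁻, μ⁺ be probability measures compactly supported in Ω⁻, Ω⁺ with densities in L^∞ with respect to Lebesgue measure. Then there exists a constant M ≥ 0 such that for every ε ∈ (0,1): v_ε ≤ v_0 + (d/2)·ε·log(1/ε) + M·ε. -/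
open MeasureTheory Real Set Filter Classical
open scoped ENNReal NNReal Topology

noncomputable section

/-!
Fix a coupling `ρ` and split its support into finitely many cells. Replacing `ρ` on each cell by the
product of its marginals there, with the same mass, keeps the marginals of `ρ` and brings the
relative entropy below the Shannon entropy of the cell masses, hence below the logarithm of the
number of cells. The transport cost changes by averages over pairs of points `z`, `w` of a common
cell of the exchange defect `c (z.1, w.2) + c (w.1, z.2) - c z - c w`. If `∂ₓc` is `L`-Lipschitz,
the descent lemma bounds this defect by `⟪a, b⟫ ≤ ‖(a + b) / 2‖ ^ 2`, where `a = z.1 - w.1` and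
`b = 2 L a - (∂ₓc z - ∂ₓc w)`, that is, by the squared distance of the coordinates
`((2L + 1) x - ∂ₓc (x, y)) / 2` of `z` and `w` in `ℝ^d`. Taking for cells the preimages under this
coordinate of cubes of side `√ε`, the cost increases by `O(ε)` and there are `O(ε ^ (-d / 2))`
cells, which gives the term `(d / 2) ε log (1 / ε)`.
-/

section Entropy

variable {α ι : Type*} [MeasurableSpace α]

lemma rnDeriv_finset_sum_ae_eq {μ : Measure α} [SigmaFinite μ] (s : Finset ι) (ν : ι → Measure α)
    [∀ i, IsFiniteMeasure (ν i)] :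
    (∑ i ∈ s, ν i).rnDeriv μ =ᵐ[μ] fun x => ∑ i ∈ s, (ν i).rnDeriv μ x := by
  induction s using Finset.induction_on with
  | empty =>
    simp only [Finset.sum_empty]
    exact Measure.rnDeriv_zero μ
  | insert i s hi ih =>
    simp only [Finset.sum_insert hi]
    filter_upwards [Measure.rnDeriv_add' (ν i) (∑ j ∈ s, ν j) μ, ih] with x hadd hs
    rw [hadd, Pi.add_apply, hs]

lemma isFiniteMeasure_of_sum (ν : ι → Measure α) [IsFiniteMeasure (Measure.sum ν)] (i : ι) :
    IsFiniteMeasure (ν i) :=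
  isFiniteMeasure_of_le _ (Measure.le_sum ν i)

lemma sum_toReal_rnDeriv_ae_eq_one [Fintype ι] (ν : ι → Measure α)
    [IsFiniteMeasure (Measure.sum ν)] :
    ∀ᵐ x ∂Measure.sum ν, ∑ i, ((ν i).rnDeriv (Measure.sum ν) x).toReal = 1 := by
  have hfin := isFiniteMeasure_of_sum ν
  have hsum := rnDeriv_finset_sum_ae_eq (μ := Measure.sum ν) Finset.univ ν
  rw [← Measure.sum_fintype] at hsum
  have hlt : ∀ᵐ x ∂Measure.sum ν, ∀ i, (ν i).rnDeriv (Measure.sum ν) x < ∞ :=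
    ae_all_iff.2 fun i => Measure.rnDeriv_lt_top _ _
  filter_upwards [hsum, hlt, Measure.rnDeriv_self (Measure.sum ν)] with x hx hx_lt hself
  rw [← ENNReal.toReal_sum fun i _ => (hx_lt i).ne, ← hx, hself, ENNReal.toReal_one]

lemma sum_real_univ_eq_one [Fintype ι] (ν : ι → Measure α) [IsProbabilityMeasure (Measure.sum ν)] :
    ∑ i, (ν i).real univ = 1 := by
  have hfin := isFiniteMeasure_of_sum ν
  have hsum : ∑ i, ν i univ = 1 := by
    rw [← measure_univ (μ := Measure.sum ν), Measure.sum_apply _ .univ, tsum_fintype]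
  simp only [measureReal_def]
  rw [← ENNReal.toReal_sum fun i _ => measure_ne_top _ _, hsum, ENNReal.toReal_one]

lemma toReal_rnDeriv_ae_le_one {μ ν : Measure α} [SigmaFinite ν] (h : μ ≤ ν) :
    ∀ᵐ x ∂ν, (μ.rnDeriv ν x).toReal ≤ 1 := by
  filter_upwards [Measure.rnDeriv_le_one_of_le h] with x hx
  exact ENNReal.toReal_le_of_le_ofReal zero_le_one (by simpa using hx)

lemma Ent_withDensity_le_integral {q : Measure α} [IsFiniteMeasure q] {F : α → ℝ≥0∞}
    (hF : Measurable F) {H : α → ℝ} (hH : Integrable H q)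
    (hle : ∀ᵐ x ∂q, (F x).toReal * Real.log (F x).toReal ≤ H x) :
    Ent (q.withDensity F) q ≤ ((∫ x, H x ∂q : ℝ) : EReal) := by
  have hrn : (fun x => ((q.withDensity F).rnDeriv q x).toReal *
      Real.log ((q.withDensity F).rnDeriv q x).toReal)
      =ᵐ[q] fun x => (F x).toReal * Real.log (F x).toReal := by
    filter_upwards [Measure.rnDeriv_withDensity q hF] with x hx
    rw [hx]
  have hlower : ∀ t : ℝ, 0 ≤ t → -1 ≤ t * Real.log t := fun t ht => by
    have := InformationTheory.klFun_nonneg ht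
    rw [InformationTheory.klFun_apply] at this
    linarith
  have hint : Integrable (fun x => (F x).toReal * Real.log (F x).toReal) q :=
    integrable_of_le_of_le (by fun_prop) (ae_of_all _ fun x => hlower _ ENNReal.toReal_nonneg) hle
      (integrable_const _) hH
  rw [Ent, if_pos ⟨withDensity_absolutelyContinuous _ _, (integrable_congr hrn).2 hint⟩,
    integral_congr_ae hrn, EReal.coe_le_coe_iff]
  exact integral_mono_ae hint hH hle

lemma sum_negMulLog_le_log_card [Fintype ι] {l : ι → ℝ} (hl : ∀ i, 0 ≤ l i) (h1 : ∑ i, l i = 1) :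
    ∑ i, negMulLog (l i) ≤ Real.log (Fintype.card ι) := by
  have hcard : (0 : ℝ) < Fintype.card ι := by
    obtain ⟨i, -, -⟩ := Finset.exists_ne_zero_of_sum_ne_zero (h1.trans_ne one_ne_zero)
    exact_mod_cast Fintype.card_pos_iff.2 ⟨i⟩
  have hJensen := Real.concaveOn_negMulLog.le_map_sum (t := Finset.univ)
    (w := fun _ : ι => (Fintype.card ι : ℝ)⁻¹) (p := l) (fun _ _ => by positivity)
    (by simp [hcard.ne']) (fun i _ => hl i)
  simp only [smul_eq_mul, ← Finset.mul_sum, h1, mul_one] at hJensen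
  rwa [negMulLog, Real.log_inv, neg_mul_neg, mul_le_mul_iff_right₀ (inv_pos.2 hcard)] at hJensen

lemma sum_mul_log_sum_le [Fintype ι] {w z l : ι → ℝ} (hw : ∀ i, 0 ≤ w i) (hw1 : ∑ i, w i = 1)
    (hz : ∀ i, 0 ≤ z i) (hz1 : ∀ i, z i ≤ 1) (hl : ∀ i, 0 ≤ l i) :
    (∑ i, l i * (w i * z i)) * Real.log (∑ i, l i * (w i * z i)) ≤
      ∑ i, l i * Real.log (l i) * (w i * z i) := by
  have hJensen := Real.convexOn_mul_log.map_sum_le (t := Finset.univ) (w := w)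
    (p := fun i => l i * z i) (fun i _ => hw i) hw1 (fun i _ => mul_nonneg (hl i) (hz i))
  simp only [smul_eq_mul, mul_left_comm (w _) (l _) (z _)] at hJensen
  refine hJensen.trans (Finset.sum_le_sum fun i _ => ?_)
  have hdrop : negMulLog (l i * z i) ≥ z i * negMulLog (l i) := by
    rw [negMulLog_mul]
    exact le_add_of_nonneg_right (mul_nonneg (hl i) (negMulLog_nonneg (hz i) (hz1 i)))
  have := mul_le_mul_of_nonneg_left hdrop (hw i)
  simp only [negMulLog] at this
  linarith

end Entropy

section Block

variable {α β ι : Type*} [MeasurableSpace α] [MeasurableSpace β]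

/-- The block approximation `∑ i, (γ i).fst ⊗ (γ i).snd / |γ i|` of the measure `∑ i, γ i`, which
replaces each piece `γ i` by the product of its marginals. The mass is inverted in `ℝ≥0`, so that
a null piece gets the weight `0` instead of `∞`. -/
def blockMeasure (γ : ι → Measure (α × β)) : Measure (α × β) :=
  Measure.sum fun i => (γ i univ).toNNReal⁻¹ • (γ i).fst.prod (γ i).snd

lemma inv_toNNReal_univ_smul_univ_smul_map {X Y : Type*} [MeasurableSpace X] [MeasurableSpace Y]
    (μ : Measure X) [IsFiniteMeasure μ] (f : X → Y) :
    (μ univ).toNNReal⁻¹ • μ univ • μ.map f = μ.map f := by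
  rcases eq_or_ne μ 0 with rfl | hμ
  · simp
  have huniv : (μ univ).toNNReal ≠ 0 := by
    simpa [ENNReal.toNNReal_eq_zero_iff, measure_ne_top] using hμ
  rw [← ENNReal.coe_toNNReal (measure_ne_top μ univ), ENNReal.toNNReal_coe]
  exact inv_smul_smul₀ huniv _

lemma blockMeasure_fst (γ : ι → Measure (α × β)) [∀ i, IsFiniteMeasure (γ i)] :
    (blockMeasure γ).fst = (Measure.sum γ).fst := by
  simp only [blockMeasure, Measure.fst_sum]
  congr with i : 1
  rw [Measure.fst, Measure.map_smul, Measure.map_fst_prod, Measure.snd_univ, Measure.fst,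
    inv_toNNReal_univ_smul_univ_smul_map]

lemma blockMeasure_snd (γ : ι → Measure (α × β)) [∀ i, IsFiniteMeasure (γ i)] :
    (blockMeasure γ).snd = (Measure.sum γ).snd := by
  simp only [blockMeasure, Measure.snd_sum]
  congr with i : 1
  rw [Measure.snd, Measure.map_smul, Measure.map_snd_prod, Measure.fst_univ, Measure.snd,
    inv_toNNReal_univ_smul_univ_smul_map]

lemma isProbabilityMeasure_blockMeasure (γ : ι → Measure (α × β))
    [IsProbabilityMeasure (Measure.sum γ)] : IsProbabilityMeasure (blockMeasure γ) := by
  have hfin := isFiniteMeasure_of_sum γ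
  exact ⟨by rw [← Measure.fst_univ, blockMeasure_fst, Measure.fst_univ, measure_univ]⟩

lemma integral_fst_prod_snd_le {ρ : Measure (α × β)} [IsFiniteMeasure ρ] {c : α × β → ℝ}
    (hc : Integrable c ρ) (hc' : Integrable c (ρ.fst.prod ρ.snd)) {η : ℝ}
    (hη : ∀ᵐ q ∂ρ.prod ρ, c (q.1.1, q.2.2) + c (q.2.1, q.1.2) ≤ c q.1 + c q.2 + 2 * η) :
    ∫ p, c p ∂ρ.fst.prod ρ.snd ≤ ρ.real univ * ∫ p, c p ∂ρ + η * (ρ.real univ * ρ.real univ) := by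
  have hmap : (ρ.prod ρ).map (Prod.map Prod.fst Prod.snd) = ρ.fst.prod ρ.snd :=
    (Measure.map_prod_map _ _ measurable_fst measurable_snd).symm
  have hmeas : Measurable (Prod.map Prod.fst Prod.snd : (α × β) × (α × β) → α × β) := by fun_prop
  have hcross : Integrable (fun q : (α × β) × (α × β) => c (q.1.1, q.2.2)) (ρ.prod ρ) :=
    (integrable_map_measure (hmap ▸ hc'.aestronglyMeasurable) hmeas.aemeasurable).1 (hmap ▸ hc')
  have hswap : Integrable (fun q : (α × β) × (α × β) => c (q.2.1, q.1.2)) (ρ.prod ρ) :=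
    hcross.swap
  have hcross_int : ∫ q, c (q.1.1, q.2.2) ∂ρ.prod ρ = ∫ p, c p ∂ρ.fst.prod ρ.snd := by
    rw [← hmap, integral_map hmeas.aemeasurable (hmap ▸ hc'.aestronglyMeasurable)]
    rfl
  have hswap_int : ∫ q, c (q.2.1, q.1.2) ∂ρ.prod ρ = ∫ p, c p ∂ρ.fst.prod ρ.snd :=
    (integral_prod_swap fun q : (α × β) × (α × β) => c (q.1.1, q.2.2)).trans hcross_int
  have hfst : Integrable (fun q : (α × β) × (α × β) => c q.1) (ρ.prod ρ) := hc.comp_fst ρ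
  have hsnd : Integrable (fun q : (α × β) × (α × β) => c q.2) (ρ.prod ρ) := hc.comp_snd ρ
  have hmono := integral_mono_ae (hcross.add hswap)
    ((hfst.add hsnd).add (integrable_const (2 * η))) hη
  have hmass : (ρ.prod ρ).real univ = ρ.real univ * ρ.real univ := by
    rw [← univ_prod_univ, measureReal_prod_prod]
  rw [integral_add' hcross hswap, integral_add' (hfst.add hsnd) (integrable_const _),
    integral_add' hfst hsnd, hcross_int, hswap_int, integral_fun_fst, integral_fun_snd,
    integral_const, hmass] at hmono
  simp only [smul_eq_mul] at hmono
  linarith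

section Fintype

variable [Fintype ι]

/-- The density of `blockMeasure γ` with respect to `μ.prod ν`, for measures `μ` and `ν` that
dominate the marginals of all the pieces `γ i`. -/
def blockDensity (γ : ι → Measure (α × β)) (μ : Measure α) (ν : Measure β) (p : α × β) : ℝ≥0∞ :=
  ∑ i, ((γ i univ).toNNReal⁻¹ : ℝ≥0) * ((γ i).fst.rnDeriv μ p.1 * (γ i).snd.rnDeriv ν p.2)

lemma measurable_blockDensity (γ : ι → Measure (α × β)) (μ : Measure α) (ν : Measure β) :
    Measurable (blockDensity γ μ ν) := by
  unfold blockDensity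
  fun_prop

lemma blockMeasure_eq_withDensity (γ : ι → Measure (α × β)) [∀ i, IsFiniteMeasure (γ i)]
    {μ : Measure α} {ν : Measure β} [SigmaFinite μ] [SigmaFinite ν]
    (hμ : ∀ i, (γ i).fst ≪ μ) (hν : ∀ i, (γ i).snd ≪ ν) :
    blockMeasure γ = (μ.prod ν).withDensity (blockDensity γ μ ν) := by
  have hpiece : ∀ i, (γ i).fst.prod (γ i).snd = (μ.prod ν).withDensity
      (fun p => (γ i).fst.rnDeriv μ p.1 * (γ i).snd.rnDeriv ν p.2) := fun i => by
    rw [← prod_withDensity (Measure.measurable_rnDeriv _ _) (Measure.measurable_rnDeriv _ _),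
      Measure.withDensity_rnDeriv_eq _ _ (hμ i), Measure.withDensity_rnDeriv_eq _ _ (hν i)]
  ext s hs
  unfold blockMeasure blockDensity
  rw [withDensity_apply _ hs, lintegral_finsetSum _ (fun i _ => by fun_prop),
    Measure.sum_apply _ hs, tsum_fintype]
  refine Finset.sum_congr rfl fun i _ => ?_
  rw [lintegral_const_mul _ (by fun_prop), Measure.smul_apply, hpiece, withDensity_apply _ hs]
  rfl

lemma toReal_blockDensity_ae_eq (γ : ι → Measure (α × β)) (μ : Measure α) (ν : Measure β)
    [∀ i, IsFiniteMeasure (γ i)] :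
    ∀ᵐ p ∂μ.prod ν, (blockDensity γ μ ν p).toReal = ∑ i, ((γ i).real univ)⁻¹ *
      (((γ i).fst.rnDeriv μ p.1).toReal * ((γ i).snd.rnDeriv ν p.2).toReal) := by
  have hfst : ∀ᵐ p ∂μ.prod ν, ∀ i, (γ i).fst.rnDeriv μ p.1 < ∞ :=
    Measure.quasiMeasurePreserving_fst.ae (ae_all_iff.2 fun i => Measure.rnDeriv_lt_top _ _)
  have hsnd : ∀ᵐ p ∂μ.prod ν, ∀ i, (γ i).snd.rnDeriv ν p.2 < ∞ :=
    Measure.quasiMeasurePreserving_snd.ae (ae_all_iff.2 fun i => Measure.rnDeriv_lt_top _ _)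
  filter_upwards [hfst, hsnd] with p h1 h2
  rw [blockDensity, ENNReal.toReal_sum fun i _ =>
    ENNReal.mul_ne_top ENNReal.coe_ne_top (ENNReal.mul_ne_top (h1 i).ne (h2 i).ne)]
  simp only [ENNReal.toReal_mul, ENNReal.coe_toReal, NNReal.coe_inv]
  rfl

lemma blockDensity_mul_log_ae_le (γ : ι → Measure (α × β)) [IsFiniteMeasure (Measure.sum γ)] :
    ∀ᵐ p ∂(Measure.sum γ).fst.prod (Measure.sum γ).snd,
      (blockDensity γ (Measure.sum γ).fst (Measure.sum γ).snd p).toReal *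
        Real.log (blockDensity γ (Measure.sum γ).fst (Measure.sum γ).snd p).toReal ≤
      ∑ i, ((γ i).real univ)⁻¹ * Real.log ((γ i).real univ)⁻¹ *
        (((γ i).fst.rnDeriv (Measure.sum γ).fst p.1).toReal *
          ((γ i).snd.rnDeriv (Measure.sum γ).snd p.2).toReal) := by
  have hfin := isFiniteMeasure_of_sum γ
  have hfst_sum : ∀ᵐ x ∂(Measure.sum γ).fst,
      ∑ i, ((γ i).fst.rnDeriv (Measure.sum γ).fst x).toReal = 1 := by
    have : IsFiniteMeasure (Measure.sum fun i => (γ i).fst) := by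
      rw [← Measure.fst_sum]
      infer_instance
    rw [Measure.fst_sum]
    exact sum_toReal_rnDeriv_ae_eq_one _
  have hsnd_le : ∀ᵐ y ∂(Measure.sum γ).snd,
      ∀ i, ((γ i).snd.rnDeriv (Measure.sum γ).snd y).toReal ≤ 1 :=
    ae_all_iff.2 fun i => toReal_rnDeriv_ae_le_one (Measure.snd_mono (Measure.le_sum γ i))
  filter_upwards [toReal_blockDensity_ae_eq γ _ _, Measure.quasiMeasurePreserving_fst.ae hfst_sum,
    Measure.quasiMeasurePreserving_snd.ae hsnd_le] with p hp hp_sum hp_le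
  rw [hp]
  exact sum_mul_log_sum_le (fun i => ENNReal.toReal_nonneg) hp_sum
    (fun i => ENNReal.toReal_nonneg) hp_le (fun i => inv_nonneg.2 measureReal_nonneg)

lemma integral_toReal_rnDeriv_mul_toReal_rnDeriv {ρ : Measure (α × β)} [IsFiniteMeasure ρ]
    {μ : Measure α} {ν : Measure β} [SigmaFinite μ] [SigmaFinite ν]
    (hμ : ρ.fst ≪ μ) (hν : ρ.snd ≪ ν) :
    ∫ p, (ρ.fst.rnDeriv μ p.1).toReal * (ρ.snd.rnDeriv ν p.2).toReal ∂μ.prod ν =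
      ρ.real univ * ρ.real univ := by
  rw [integral_prod_mul (fun x => (ρ.fst.rnDeriv μ x).toReal) fun y => (ρ.snd.rnDeriv ν y).toReal,
    Measure.integral_toReal_rnDeriv hμ, Measure.integral_toReal_rnDeriv hν]
  simp only [measureReal_def, Measure.fst_univ, Measure.snd_univ]

lemma Ent_blockMeasure_le_log_card (γ : ι → Measure (α × β))
    [IsProbabilityMeasure (Measure.sum γ)] :
    Ent (blockMeasure γ) ((Measure.sum γ).fst.prod (Measure.sum γ).snd) ≤
      ((Real.log (Fintype.card ι) : ℝ) : EReal) := by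
  have hfin := isFiniteMeasure_of_sum γ
  have hfst i : (γ i).fst ≪ (Measure.sum γ).fst :=
    Measure.absolutelyContinuous_of_le (Measure.fst_mono (Measure.le_sum γ i))
  have hsnd i : (γ i).snd ≪ (Measure.sum γ).snd :=
    Measure.absolutelyContinuous_of_le (Measure.snd_mono (Measure.le_sum γ i))
  have hint i : Integrable (fun p : α × β => ((γ i).real univ)⁻¹ * Real.log ((γ i).real univ)⁻¹ *
      (((γ i).fst.rnDeriv (Measure.sum γ).fst p.1).toReal *
        ((γ i).snd.rnDeriv (Measure.sum γ).snd p.2).toReal))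
      ((Measure.sum γ).fst.prod (Measure.sum γ).snd) :=
    (Measure.integrable_toReal_rnDeriv.mul_prod Measure.integrable_toReal_rnDeriv).const_mul _
  rw [blockMeasure_eq_withDensity γ hfst hsnd]
  refine (Ent_withDensity_le_integral (measurable_blockDensity _ _ _)
    (integrable_finsetSum _ fun i _ => hint i) (blockDensity_mul_log_ae_le γ)).trans
    (EReal.coe_le_coe_iff.2 ?_)
  refine le_of_eq_of_le ?_ (sum_negMulLog_le_log_card (fun i => measureReal_nonneg)
    (sum_real_univ_eq_one γ))
  rw [integral_finsetSum _ fun i _ => hint i]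
  refine Finset.sum_congr rfl fun i _ => ?_
  rw [integral_const_mul, integral_toReal_rnDeriv_mul_toReal_rnDeriv (hfst i) (hsnd i),
    Real.log_inv, negMulLog]
  rcases eq_or_ne ((γ i).real univ) 0 with h0 | h0
  · simp [h0]
  · field_simp

lemma integral_blockMeasure (γ : ι → Measure (α × β)) {c : α × β → ℝ}
    (hc : ∀ i, Integrable c ((γ i).fst.prod (γ i).snd)) :
    ∫ p, c p ∂blockMeasure γ =
      ∑ i, ((γ i).real univ)⁻¹ * ∫ p, c p ∂(γ i).fst.prod (γ i).snd := by
  rw [blockMeasure, Measure.sum_fintype,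
    integral_finsetSum_measure fun i _ => (hc i).smul_measure_nnreal]
  refine Finset.sum_congr rfl fun i _ => ?_
  rw [integral_smul_nnreal_measure]
  rfl

end Fintype

lemma integral_blockMeasure_le [Finite ι] (γ : ι → Measure (α × β))
    [IsProbabilityMeasure (Measure.sum γ)] {c : α × β → ℝ} (hc : ∀ i, Integrable c (γ i))
    (hc' : ∀ i, Integrable c ((γ i).fst.prod (γ i).snd)) {η : ℝ}
    (hη : ∀ i, ∀ᵐ q ∂(γ i).prod (γ i),
      c (q.1.1, q.2.2) + c (q.2.1, q.1.2) ≤ c q.1 + c q.2 + 2 * η) :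
    ∫ p, c p ∂blockMeasure γ ≤ ∫ p, c p ∂Measure.sum γ + η := by
  have := Fintype.ofFinite ι
  have hfin := isFiniteMeasure_of_sum γ
  have hpiece i : ((γ i).real univ)⁻¹ * ∫ p, c p ∂(γ i).fst.prod (γ i).snd ≤
      ∫ p, c p ∂γ i + η * (γ i).real univ := by
    rcases eq_zero_or_neZero (γ i) with h0 | h0
    · simp [h0]
    · rw [inv_mul_le_iff₀ measureReal_univ_pos]
      linarith [integral_fst_prod_snd_le (hc i) (hc' i) (hη i)]
  calc ∫ p, c p ∂blockMeasure γ
      = ∑ i, ((γ i).real univ)⁻¹ * ∫ p, c p ∂(γ i).fst.prod (γ i).snd :=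
        integral_blockMeasure γ hc'
    _ ≤ ∑ i, (∫ p, c p ∂γ i + η * (γ i).real univ) := Finset.sum_le_sum fun i _ => hpiece i
    _ = ∫ p, c p ∂Measure.sum γ + η := by
        rw [Finset.sum_add_distrib, ← Finset.mul_sum, sum_real_univ_eq_one γ, mul_one,
          Measure.sum_fintype, integral_finsetSum_measure fun i _ => hc i]

end Block

section EntropicCost

variable {α β ι : Type*} [MeasurableSpace α] [MeasurableSpace β] {μ : Measure α} {ν : Measure β}

lemma sum_restrict_preimage_singleton [Countable ι] [MeasurableSpace ι]
    [MeasurableSingletonClass ι] (μ : Measure α) {κ : α → ι} (hκ : Measurable κ) :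
    Measure.sum (fun i => μ.restrict (κ ⁻¹' {i})) = μ := by
  rw [← Measure.restrict_iUnion (fun i j hij => Disjoint.preimage _ (by simpa using hij))
    fun i => hκ (measurableSet_singleton i), ← preimage_iUnion, iUnion_of_singleton, preimage_univ,
    Measure.restrict_univ]

lemma ae_mem_prod_of_fst_snd {ρ : Measure (α × β)} {A : Set α} {B : Set β}
    (hA : ∀ᵐ x ∂ρ.fst, x ∈ A) (hB : ∀ᵐ y ∂ρ.snd, y ∈ B) : ∀ᵐ z ∂ρ, z ∈ A ×ˢ B :=
  (ae_of_ae_map measurable_fst.aemeasurable hA).and (ae_of_ae_map measurable_snd.aemeasurable hB)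

lemma entCost_congr {A : Set α} {B : Set β} (hA : ∀ᵐ x ∂μ, x ∈ A) (hB : ∀ᵐ y ∂ν, y ∈ B)
    {c c' : α × β → ℝ} (hcc' : EqOn c c' (A ×ˢ B)) : entCost μ ν c = entCost μ ν c' := by
  ext ε
  simp only [entCost]
  congr 1
  ext v
  refine exists_congr fun γ => and_congr_right fun _ => and_congr_right fun hμ =>
    and_congr_right fun hν => ?_
  have hc : ∫ p, c p ∂γ = ∫ p, c' p ∂γ := integral_congr_ae <|
    (ae_mem_prod_of_fst_snd (hμ ▸ hA) (hν ▸ hB)).mono fun _ hp => hcc' hp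
  rw [hc]

lemma entCost_le_of_Ent_le {c : α × β → ℝ} {σ : Measure (α × β)} [IsProbabilityMeasure σ]
    (hμ : σ.fst = μ) (hν : σ.snd = ν) {s ε : ℝ} (hε : 0 ≤ ε)
    (hEnt : Ent σ (μ.prod ν) ≤ (s : EReal)) :
    entCost μ ν c ε ≤ ((∫ p, c p ∂σ + ε * s : ℝ) : EReal) := by
  have hle : entCost μ ν c ε ≤ ((∫ p, c p ∂σ : ℝ) : EReal) + (ε : EReal) * Ent σ (μ.prod ν) :=
    sInf_le ⟨σ, inferInstance, hμ, hν, rfl⟩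
  rw [EReal.coe_add, EReal.coe_mul]
  exact hle.trans (by gcongr)

lemma le_entCost_zero_add {c : α × β → ℝ} {v : EReal} {r : ℝ}
    (h : ∀ ρ : Measure (α × β), IsProbabilityMeasure ρ → ρ.fst = μ → ρ.snd = ν →
      v ≤ ((∫ p, c p ∂ρ + r : ℝ) : EReal)) :
    v ≤ entCost μ ν c 0 + (r : EReal) := by
  rw [← EReal.sub_le_iff_le_add (.inl (EReal.coe_ne_bot _)) (.inl (EReal.coe_ne_top _))]
  refine le_sInf ?_
  rintro _ ⟨ρ, hρ, hμ, hν, rfl⟩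
  rw [EReal.coe_zero, zero_mul, add_zero,
    EReal.sub_le_iff_le_add (.inl (EReal.coe_ne_bot _)) (.inl (EReal.coe_ne_top _)),
    ← EReal.coe_add]
  exact h ρ hρ hμ hν

lemma entCost_le_of_fintype_partition [Fintype ι] [MeasurableSpace ι] [MeasurableSingletonClass ι]
    {A : Set α} {B : Set β} (hA : ∀ᵐ x ∂μ, x ∈ A) (hB : ∀ᵐ y ∂ν, y ∈ B)
    {c : α × β → ℝ} (hc : Measurable c) {b : ℝ} (hb : ∀ p, ‖c p‖ ≤ b)
    {κ : α × β → ι} (hκ : Measurable κ) {η : ℝ}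
    (hη : ∀ z ∈ A ×ˢ B, ∀ w ∈ A ×ˢ B, κ z = κ w →
      c (z.1, w.2) + c (w.1, z.2) ≤ c z + c w + 2 * η) {ε : ℝ} (hε : 0 ≤ ε) :
    entCost μ ν c ε ≤ entCost μ ν c 0 + ((η + ε * Real.log (Fintype.card ι) : ℝ) : EReal) := by
  refine le_entCost_zero_add fun ρ hρ hμ hν => ?_
  subst hμ hν
  have hint (m : Measure (α × β)) [IsFiniteMeasure m] : Integrable c m :=
    .of_bound hc.aestronglyMeasurable b (ae_of_all _ hb)
  set γ : ι → Measure (α × β) := fun i => ρ.restrict (κ ⁻¹' {i})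
  have hsum : Measure.sum γ = ρ := sum_restrict_preimage_singleton ρ hκ
  have hprob_sum : IsProbabilityMeasure (Measure.sum γ) := by rwa [hsum]
  have hprob := isProbabilityMeasure_blockMeasure γ
  have hmem i : ∀ᵐ z ∂γ i, z ∈ A ×ˢ B ∧ κ z = i :=
    (ae_restrict_of_ae (ae_mem_prod_of_fst_snd hA hB)).and
      (ae_restrict_mem (hκ (measurableSet_singleton i)))
  have hcost : ∫ p, c p ∂blockMeasure γ ≤ ∫ p, c p ∂ρ + η := by
    conv_rhs => rw [← hsum]
    refine integral_blockMeasure_le γ (fun i => hint _) (fun i => hint _) fun i => ?_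
    filter_upwards [Measure.quasiMeasurePreserving_fst.ae (hmem i),
      Measure.quasiMeasurePreserving_snd.ae (hmem i)] with q hz hw
    exact hη _ hz.1 _ hw.1 (hz.2.trans hw.2.symm)
  have hEnt := Ent_blockMeasure_le_log_card γ
  rw [hsum] at hEnt
  refine (entCost_le_of_Ent_le (by rw [blockMeasure_fst, hsum]) (by rw [blockMeasure_snd, hsum])
    hε hEnt).trans (EReal.coe_le_coe_iff.2 ?_)
  linarith

end EntropicCost

section Grid

variable {ι : Type*} {R h : ℝ}

/-- The index of the cell containing `u` in the grid of cubes of side `h` covering the cube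
`[-R, R] ^ ι`; indices of points outside that cube wrap around. -/
def gridIndex (R h : ℝ) (u : EuclideanSpace ℝ ι) : ι → Fin (⌊2 * R / h⌋₊ + 1) :=
  fun i => Fin.ofNat _ ⌊(u i + R) / h⌋₊

lemma measurable_gridIndex (R h : ℝ) : Measurable (gridIndex (ι := ι) R h) := by
  refine measurable_pi_lambda _ fun i => ?_
  exact (measurable_from_top (f := Fin.ofNat (⌊2 * R / h⌋₊ + 1))).comp
    (Nat.measurable_floor.comp (by fun_prop))

lemma abs_sub_le_one_of_natFloor_eq {a b : ℝ} (ha : 0 ≤ a) (hb : 0 ≤ b) (h : ⌊a⌋₊ = ⌊b⌋₊) :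
    |a - b| ≤ 1 := by
  have ha_le := Nat.floor_le ha
  have hb_le := Nat.floor_le hb
  have ha_lt := Nat.lt_floor_add_one a
  have hb_lt := Nat.lt_floor_add_one b
  rw [h] at ha_le ha_lt
  exact abs_le.2 ⟨by linarith, by linarith⟩

lemma val_gridIndex (hh : 0 ≤ h) {u : EuclideanSpace ℝ ι} {i : ι} (hu : u i ≤ R) :
    (gridIndex R h u i : ℕ) = ⌊(u i + R) / h⌋₊ := by
  simp only [gridIndex, Fin.val_ofNat]
  refine Nat.mod_eq_of_lt (Nat.lt_succ_of_le (Nat.floor_mono ?_))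
  gcongr
  linarith

variable [Fintype ι]

lemma norm_sub_sq_le_of_gridIndex_eq (hh : 0 < h) {u v : EuclideanSpace ℝ ι} (hu : ‖u‖ ≤ R)
    (hv : ‖v‖ ≤ R) (huv : gridIndex R h u = gridIndex R h v) :
    ‖u - v‖ ^ 2 ≤ Fintype.card ι * h ^ 2 := by
  have hcoord {w : EuclideanSpace ℝ ι} (hw : ‖w‖ ≤ R) (i : ι) : -R ≤ w i ∧ w i ≤ R :=
    abs_le.1 ((PiLp.norm_apply_le w i).trans hw)
  have hscaled {w : EuclideanSpace ℝ ι} (hw : ‖w‖ ≤ R) (i : ι) : 0 ≤ (w i + R) / h :=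
    div_nonneg (by linarith [hcoord hw i]) hh.le
  have hdist i : |u i - v i| ≤ h := by
    have hfloor : ⌊(u i + R) / h⌋₊ = ⌊(v i + R) / h⌋₊ := by
      rw [← val_gridIndex hh.le (hcoord hu i).2, ← val_gridIndex hh.le (hcoord hv i).2, huv]
    have := abs_sub_le_one_of_natFloor_eq (hscaled hu i) (hscaled hv i) hfloor
    rwa [← sub_div, add_sub_add_right_eq_sub, abs_div, abs_of_pos hh, div_le_one hh] at this
  calc ‖u - v‖ ^ 2 = ∑ i, |u i - v i| ^ 2 := EuclideanSpace.norm_sq_eq _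
    _ ≤ ∑ _i : ι, h ^ 2 := by
        gcongr with i
        exact hdist i
    _ = Fintype.card ι * h ^ 2 := by simp

lemma log_card_grid_le {ε : ℝ} (hR : 0 ≤ R) (hε : ε ∈ Ioo (0 : ℝ) 1) :
    Real.log (Fintype.card (ι → Fin (⌊2 * R / √ε⌋₊ + 1))) ≤
      Fintype.card ι / 2 * Real.log (1 / ε) + Fintype.card ι * Real.log (2 * R + 1) := by
  have hsqrt_pos : 0 < √ε := Real.sqrt_pos.2 hε.1
  have hside : ((⌊2 * R / √ε⌋₊ + 1 : ℕ) : ℝ) ≤ (2 * R + 1) / √ε := by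
    push_cast
    rw [add_div]
    gcongr
    · exact Nat.floor_le (by positivity)
    · exact (one_le_div hsqrt_pos).2 (Real.sqrt_le_one.2 hε.2.le)
  have hlog : Real.log (⌊2 * R / √ε⌋₊ + 1 : ℕ) ≤ Real.log (2 * R + 1) - Real.log ε / 2 := by
    rw [← Real.log_sqrt hε.1.le, ← Real.log_div (by positivity) hsqrt_pos.ne']
    exact Real.log_le_log (by positivity) hside
  rw [Fintype.card_fun, Fintype.card_fin, Nat.cast_pow, Real.log_pow, one_div, Real.log_inv]
  linarith [mul_le_mul_of_nonneg_left hlog (Nat.cast_nonneg (α := ℝ) (Fintype.card ι))]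

end Grid

section Exchange

lemma entCost_le_of_exchange_le_norm_sub_sq {α β ι : Type*} [MeasurableSpace α]
    [MeasurableSpace β] [Fintype ι] {μ : Measure α} {ν : Measure β} {A : Set α} {B : Set β}
    (hA : ∀ᵐ x ∂μ, x ∈ A) (hB : ∀ᵐ y ∂ν, y ∈ B) {c : α × β → ℝ} (hc : Measurable c) {b : ℝ}
    (hb : ∀ z, ‖c z‖ ≤ b) {u : α × β → EuclideanSpace ℝ ι} (hu : Measurable u) {R : ℝ}
    (hR : 0 ≤ R) (huR : ∀ z, ‖u z‖ ≤ R)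
    (hex : ∀ z ∈ A ×ˢ B, ∀ w ∈ A ×ˢ B,
      c (z.1, w.2) + c (w.1, z.2) ≤ c z + c w + ‖u z - u w‖ ^ 2) {ε : ℝ} (hε : ε ∈ Ioo 0 1) :
    entCost μ ν c ε ≤ entCost μ ν c 0 +
      ((Fintype.card ι / 2 * ε * Real.log (1 / ε) +
        (Fintype.card ι * Real.log (2 * R + 1) + Fintype.card ι / 2) * ε : ℝ) : EReal) := by
  refine (entCost_le_of_fintype_partition hA hB hc hb ((measurable_gridIndex R √ε).comp hu)
    (η := Fintype.card ι * ε / 2) (fun z hz w hw hzw => ?_) hε.1.le).trans ?_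
  · have hdist := norm_sub_sq_le_of_gridIndex_eq (Real.sqrt_pos.2 hε.1) (huR z) (huR w) hzw
    rw [Real.sq_sqrt hε.1.le] at hdist
    linarith [hex z hz w hw]
  · refine add_le_add_right (EReal.coe_le_coe_iff.2 ?_) _
    linarith [mul_le_mul_of_nonneg_left (log_card_grid_le (ι := ι) hR hε) hε.1.le]

lemma exists_measurable_bounded_eqOn_of_isCompact {X E : Type*} [TopologicalSpace X] [T2Space X]
    [MeasurableSpace X] [OpensMeasurableSpace X] [NormedAddCommGroup E] [MeasurableSpace E]
    [BorelSpace E] {K : Set X} (hK : IsCompact K) {f : X → E} (hf : ContinuousOn f K) :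
    ∃ f' : X → E, Measurable f' ∧ EqOn f f' K ∧ ∃ b, 0 ≤ b ∧ ∀ x, ‖f' x‖ ≤ b := by
  obtain ⟨b, hb⟩ := hK.exists_bound_of_continuousOn hf
  refine ⟨K.piecewise f 0, hf.measurable_piecewise continuousOn_const hK.measurableSet,
    fun x hx => (piecewise_eq_of_mem _ _ _ hx).symm, max b 0, le_max_right _ _, fun x => ?_⟩
  by_cases hx : x ∈ K
  · rw [piecewise_eq_of_mem _ _ _ hx]
    exact (hb x hx).trans (le_max_left _ _)
  · simp [piecewise_eq_of_notMem _ _ _ hx]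

lemma exists_entCost_le_of_exchange_le_norm_sub_sq {X Y E : Type*} [TopologicalSpace X]
    [T2Space X] [MeasurableSpace X] [OpensMeasurableSpace X] [TopologicalSpace Y] [T2Space Y]
    [MeasurableSpace Y] [OpensMeasurableSpace Y] [SecondCountableTopologyEither X Y]
    [NormedAddCommGroup E] [InnerProductSpace ℝ E] [FiniteDimensional ℝ E]
    {μ : Measure X} {ν : Measure Y} {A : Set X} {B : Set Y} (hA : IsCompact A) (hB : IsCompact B)
    (hμA : ∀ᵐ x ∂μ, x ∈ A) (hνB : ∀ᵐ y ∂ν, y ∈ B) {c : X × Y → ℝ}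
    (hc : ContinuousOn c (A ×ˢ B)) {u : X × Y → E} (hu : ContinuousOn u (A ×ˢ B))
    (hex : ∀ z ∈ A ×ˢ B, ∀ w ∈ A ×ˢ B,
      c (z.1, w.2) + c (w.1, z.2) ≤ c z + c w + ‖u z - u w‖ ^ 2) :
    ∃ M : ℝ, 0 ≤ M ∧ ∀ ε ∈ Ioo (0 : ℝ) 1, entCost μ ν c ε ≤ entCost μ ν c 0 +
      ((Module.finrank ℝ E / 2 * ε * Real.log (1 / ε) + M * ε : ℝ) : EReal) := by
  let e := (stdOrthonormalBasis ℝ E).repr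
  obtain ⟨c', hc'_meas, hcc', b, -, hb⟩ :=
    exists_measurable_bounded_eqOn_of_isCompact (hA.prod hB) hc
  obtain ⟨u', hu'_meas, huu', R, hR, huR⟩ :=
    exists_measurable_bounded_eqOn_of_isCompact (hA.prod hB) (e.continuous.comp_continuousOn hu)
  have hex' : ∀ z ∈ A ×ˢ B, ∀ w ∈ A ×ˢ B,
      c' (z.1, w.2) + c' (w.1, z.2) ≤ c' z + c' w + ‖u' z - u' w‖ ^ 2 := fun z hz w hw => by
    have hzw : (z.1, w.2) ∈ A ×ˢ B := ⟨hz.1, hw.2⟩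
    have hwz : (w.1, z.2) ∈ A ×ˢ B := ⟨hw.1, hz.2⟩
    rw [← hcc' hz, ← hcc' hw, ← hcc' hzw, ← hcc' hwz, ← huu' hz, ← huu' hw,
      Function.comp_apply, Function.comp_apply, ← map_sub, LinearIsometryEquiv.norm_map]
    exact hex z hz w hw
  have hlog : 0 ≤ Real.log (2 * R + 1) := Real.log_nonneg (by linarith)
  refine ⟨Module.finrank ℝ E * Real.log (2 * R + 1) + Module.finrank ℝ E / 2, by positivity,
    fun ε hε => ?_⟩
  rw [entCost_congr hμA hνB hcc', ← Fintype.card_fin (Module.finrank ℝ E)]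
  exact entCost_le_of_exchange_le_norm_sub_sq hμA hνB hc'_meas hb hu'_meas hR huR hex' hε

end Exchange

section Minty

lemma norm_image_sub_sub_le_of_lipschitzOnWith {V W : Type*} [NormedAddCommGroup V]
    [NormedSpace ℝ V] [NormedAddCommGroup W] [NormedSpace ℝ W] {f : V → W} {f' : V → V →L[ℝ] W}
    {s : Set V} {L : ℝ≥0} (hf : ∀ x ∈ s, HasFDerivWithinAt f (f' x) s x)
    (hL : LipschitzOnWith L f' s) {x y : V} (hxy : segment ℝ x y ⊆ s) :
    ‖f y - f x - f' x (y - x)‖ ≤ L * ‖y - x‖ ^ 2 := by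
  have hx : x ∈ s := hxy (left_mem_segment ℝ x y)
  have hderiv : ∀ z ∈ segment ℝ x y, ‖f' z - f' x‖ ≤ L * ‖y - x‖ := fun z hz =>
    (hL.norm_sub_le (hxy hz) hx).trans (by gcongr; exact norm_sub_le_of_mem_segment hz)
  rw [pow_two, ← mul_assoc]
  exact Convex.norm_image_sub_le_of_norm_hasFDerivWithin_le' (fun z hz => (hf z (hxy hz)).mono hxy)
    hderiv (convex_segment x y) (left_mem_segment ℝ x y) (right_mem_segment ℝ x y)

lemma real_inner_le_norm_half_add_sq {E : Type*} [NormedAddCommGroup E] [InnerProductSpace ℝ E]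
    (a b : E) : inner ℝ a b ≤ ‖(2⁻¹ : ℝ) • (a + b)‖ ^ 2 := by
  rw [norm_smul, mul_pow, norm_add_sq_real]
  norm_num
  linarith [norm_sub_sq_real a b, sq_nonneg ‖a - b‖]

variable {E F : Type*} [NormedAddCommGroup E] [InnerProductSpace ℝ E] [CompleteSpace E]
  [NormedAddCommGroup F] [NormedSpace ℝ F] {c : E × F → ℝ} {g : E × F → E × F →L[ℝ] ℝ}

/-- The partial gradient `∂ₓc` of a function `c` of `(x, y)` whose derivative is `g`: the Riesz
representative of the restriction of `g z` to the first factor. -/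
def gradFst (g : E × F → E × F →L[ℝ] ℝ) (z : E × F) : E :=
  (InnerProductSpace.toDual ℝ E).symm ((g z).comp (ContinuousLinearMap.inl ℝ E F))

lemma inner_gradFst (g : E × F → E × F →L[ℝ] ℝ) (z : E × F) (v : E) :
    inner ℝ (gradFst g z) v = g z (v, 0) := by
  simp [gradFst]

/-- The Minty-type coordinate `(x, y) ↦ ((2L + 1) x - ∂ₓc (x, y)) / 2`: for a cost `c` whose
derivative `g` is `L`-Lipschitz, exchanging the second coordinates of two points costs at most the
squared distance of their Minty-type coordinates. -/
def mintyCoord (g : E × F → E × F →L[ℝ] ℝ) (L : ℝ) (z : E × F) : E :=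
  (2⁻¹ : ℝ) • ((2 * L + 1) • z.1 - gradFst g z)

lemma continuousOn_mintyCoord {s : Set (E × F)} (hg : ContinuousOn g s) (L : ℝ) :
    ContinuousOn (mintyCoord g L) s := by
  unfold mintyCoord gradFst
  have := (InnerProductSpace.toDual ℝ E).symm.continuous.comp_continuousOn
    (hg.clm_comp (continuousOn_const (c := ContinuousLinearMap.inl ℝ E F)))
  fun_prop

lemma sub_le_inner_gradFst_add {A : Set E} {B : Set F} {L : ℝ≥0}
    (hc : ∀ p ∈ A ×ˢ B, HasFDerivWithinAt c (g p) (A ×ˢ B) p) (hL : LipschitzOnWith L g (A ×ˢ B))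
    {x x' : E} {y : F} (hx : segment ℝ x x' ⊆ A) (hy : y ∈ B) :
    c (x', y) - c (x, y) ≤ inner ℝ (gradFst g (x, y)) (x' - x) + L * ‖x' - x‖ ^ 2 := by
  have hseg : segment ℝ (x, y) (x', y) ⊆ A ×ˢ B := by
    rw [← Prod.image_mk_segment_left]
    exact image_subset_iff.2 fun t ht => ⟨hx ht, hy⟩
  have hdescent := norm_image_sub_sub_le_of_lipschitzOnWith hc hL hseg
  rw [Prod.mk_sub_mk, sub_self, Prod.norm_mk, norm_zero, max_eq_left (norm_nonneg _)] at hdescent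
  rw [inner_gradFst]
  linarith [(le_abs_self _).trans hdescent]

lemma exchange_le_norm_mintyCoord_sub_sq {A : Set E} {B : Set F} {L : ℝ≥0}
    (hc : ∀ p ∈ A ×ˢ B, HasFDerivWithinAt c (g p) (A ×ˢ B) p) (hL : LipschitzOnWith L g (A ×ˢ B))
    {z w : E × F} (hzw : segment ℝ z.1 w.1 ⊆ A) (hz : z.2 ∈ B) (hw : w.2 ∈ B) :
    c (z.1, w.2) + c (w.1, z.2) ≤ c z + c w + ‖mintyCoord g L z - mintyCoord g L w‖ ^ 2 := by
  have hfrom_z := sub_le_inner_gradFst_add hc hL hzw hz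
  have hfrom_w := sub_le_inner_gradFst_add hc hL (segment_symm ℝ z.1 w.1 ▸ hzw) hw
  have hcoord : mintyCoord g L z - mintyCoord g L w = (2⁻¹ : ℝ) • ((z.1 - w.1) +
      ((2 * (L : ℝ)) • (z.1 - w.1) - (gradFst g z - gradFst g w))) := by
    unfold mintyCoord
    module
  have hinner := real_inner_le_norm_half_add_sq (z.1 - w.1)
    ((2 * (L : ℝ)) • (z.1 - w.1) - (gradFst g z - gradFst g w))
  rw [← hcoord, inner_sub_right, inner_smul_right, real_inner_self_eq_norm_sq,
    real_inner_comm, inner_sub_left] at hinner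
  rw [← neg_sub z.1 w.1, norm_neg, inner_neg_right] at hfrom_z
  linarith

end Minty

lemma isCompact_convexJoin {V : Type*} [AddCommGroup V] [Module ℝ V] [TopologicalSpace V]
    [IsTopologicalAddGroup V] [ContinuousSMul ℝ V] {s t : Set V} (hs : IsCompact s)
    (ht : IsCompact t) : IsCompact (convexJoin ℝ s t) := by
  have himage : convexJoin ℝ s t =
      (fun p : ℝ × V × V => p.2.1 + p.1 • (p.2.2 - p.2.1)) '' (Icc (0 : ℝ) 1 ×ˢ s ×ˢ t) := by
    ext x
    simp only [mem_convexJoin, segment_eq_image', mem_image, Prod.exists, mem_prod]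
    tauto
  rw [himage]
  exact (isCompact_Icc.prod (hs.prod ht)).image (by fun_prop)

theorem entCost_upper_bound_C11_general {E F : Type*} [NormedAddCommGroup E]
    [InnerProductSpace ℝ E] [FiniteDimensional ℝ E] [MeasurableSpace E] [BorelSpace E]
    [NormedAddCommGroup F] [NormedSpace ℝ F] [MeasurableSpace F] [BorelSpace F]
    {Ωm : Set E} {Ωp : Set F} (hΩmc : Convex ℝ Ωm) {μm : Measure E} {μp : Measure F}
    (hsm : ∃ K, IsCompact K ∧ K ⊆ Ωm ∧ μm Kᶜ = 0) (hsp : ∃ K, IsCompact K ∧ K ⊆ Ωp ∧ μp Kᶜ = 0)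
    {c : E × F → ℝ} {g : E × F → E × F →L[ℝ] ℝ}
    (hdiff : ∀ p ∈ Ωm ×ˢ Ωp, HasFDerivWithinAt c (g p) (Ωm ×ˢ Ωp) p)
    (hlip : LocallyLipschitzOn (Ωm ×ˢ Ωp) g) :
    ∃ M : ℝ, 0 ≤ M ∧ ∀ ε ∈ Ioo (0 : ℝ) 1, entCost μm μp c ε ≤ entCost μm μp c 0 +
      ((Module.finrank ℝ E / 2 * ε * Real.log (1 / ε) + M * ε : ℝ) : EReal) := by
  obtain ⟨Km, hKm, hKmΩ, hμm⟩ := hsm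
  obtain ⟨Kp, hKp, hKpΩ, hμp⟩ := hsp
  have hjoin : convexJoin ℝ Km Km ×ˢ Kp ⊆ Ωm ×ˢ Ωp :=
    prod_mono (convexJoin_subset hKmΩ hKmΩ hΩmc) hKpΩ
  have hKm_join : Km ×ˢ Kp ⊆ convexJoin ℝ Km Km ×ˢ Kp := prod_mono_left fun x hx =>
    segment_subset_convexJoin hx hx (left_mem_segment ℝ x x)
  obtain ⟨L, hL⟩ := (hlip.mono hjoin).exists_lipschitzOnWith_of_compact
    ((isCompact_convexJoin hKm hKm).prod hKp)
  have hc : ∀ p ∈ convexJoin ℝ Km Km ×ˢ Kp,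
      HasFDerivWithinAt c (g p) (convexJoin ℝ Km Km ×ˢ Kp) p :=
    fun p hp => (hdiff p (hjoin hp)).mono hjoin
  exact exists_entCost_le_of_exchange_le_norm_sub_sq hKm hKp (mem_ae_iff.2 hμm) (mem_ae_iff.2 hμp)
    (fun p hp => (hc p (hKm_join hp)).continuousWithinAt.mono hKm_join)
    (continuousOn_mintyCoord (hL.continuousOn.mono hKm_join) L) fun z hz w hw =>
      exchange_le_norm_mintyCoord_sub_sq hc hL (segment_subset_convexJoin hz.1 hw.1) hz.2 hw.2

/-- Upper bound for `C^{1,1}_loc` costs and `L^∞` marginals: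
`v_ε ≤ v₀ + (d/2) ε log(1/ε) + M ε` on `(0,1)`. -/
theorem entCost_upper_bound_C11 {d : ℕ}
    (Ωm Ωp : Set (EuclideanSpace ℝ (Fin d)))
    (hΩmo : IsOpen Ωm) (hΩpo : IsOpen Ωp) (hΩmc : Convex ℝ Ωm) (hΩpc : Convex ℝ Ωp)
    (μm μp : Measure (EuclideanSpace ℝ (Fin d)))
    [IsProbabilityMeasure μm] [IsProbabilityMeasure μp]
    (hsm : ∃ K, IsCompact K ∧ K ⊆ Ωm ∧ μm Kᶜ = 0)
    (hsp : ∃ K, IsCompact K ∧ K ⊆ Ωp ∧ μp Kᶜ = 0)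
    (hacm : μm ≪ volume) (hacp : μp ≪ volume)
    (hbdm : ∃ C : ℝ≥0∞, C ≠ ⊤ ∧ ∀ᵐ x ∂volume, μm.rnDeriv volume x ≤ C)
    (hbdp : ∃ C : ℝ≥0∞, C ≠ ⊤ ∧ ∀ᵐ x ∂volume, μp.rnDeriv volume x ≤ C)
    (c : EuclideanSpace ℝ (Fin d) × EuclideanSpace ℝ (Fin d) → ℝ)
    (g : EuclideanSpace ℝ (Fin d) × EuclideanSpace ℝ (Fin d) →
      (EuclideanSpace ℝ (Fin d) × EuclideanSpace ℝ (Fin d)) →L[ℝ] ℝ)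
    (hdiff : ∀ p ∈ Ωm ×ˢ Ωp, HasFDerivAt c (g p) p)
    (hlip : ∀ p ∈ Ωm ×ˢ Ωp, ∃ K : ℝ≥0, ∃ t ∈ nhdsWithin p (Ωm ×ˢ Ωp), LipschitzOnWith K g t) :
    ∃ M : ℝ, 0 ≤ M ∧ ∀ ε ∈ Set.Ioo (0 : ℝ) 1,
      entCost μm μp c ε ≤ entCost μm μp c 0
        + (((d : ℝ) / 2 * ε * Real.log (1 / ε) + M * ε : ℝ) : EReal) := by
  simpa only [finrank_euclideanSpace_fin] using entCost_upper_bound_C11_general hΩmc hsm hsp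
    (fun p hp => (hdiff p hp).hasFDerivWithinAt) fun _ hp => hlip _ hp
end
end
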